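/- arXiv:1407.4897 — 2 statements merged into one kernel-verified Lean document; each statement's English description precedes it below -/
import Mathlib

section
/- As k → ∞ one has H(k) ≤ k log k + k log log k − k + o(k); that is, for every ε > 0 there exists K such that for all k ≥ K there is an admissible k-tuple of diameter at most k log k + k log log k − k + ε·k. -/
/-- A `k`-tuple of increasing integers is admissible if for every prime `p`
its entries do not occupy all residue classes modulo `p`. -/
def Admissible {k : ℕ} (h : Fin k → ℤ) : Prop :=
  StrictMono h ∧ ∀ p : ℕ, p.Prime → ∃ a : ZMod p, ∀ i, (h i : ZMod p) ≠ a

/-!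
Any `k` primes in `(k, N]` form an admissible tuple: they avoid the class `0` modulo every `p ≤ k`,
and `k` integers cannot cover all classes modulo a larger prime. So it suffices to bound the least
`N` with `π(N) ≥ π(k) + k` up to `o(k)`, and for this the expansion
`π(x) = x / log x + (1 + o(1)) x / (log x) ^ 2` is exactly enough.

This expansion follows from `ψ(x) = x + O(x / (log x) ^ A)`, which is proved for every `A` without a
zero-free region. On `1 ≤ re s` the 3-4-1 inequality and convexity-type bounds for `ζ` show that all
derivatives of `-ζ'/ζ - ζ` are `O(‖s‖ ^ η)` for every `η > 0`. The `2A`-th derivative is the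
Dirichlet series of `(Λ(n) - 1) (log n) ^ (2A)`, up to sign; Perron's formula with the weight
`x - n` bounds the smoothed sum of its coefficients by `O(x ^ 2)`. Since these coefficients are at
least `-(log n) ^ (2A)`, a Tauberian argument unsmooths the sum to `O(x (log x) ^ A)`, and partial
summation then divides out the factor `(log n) ^ (2A)`.
-/

open Filter Topology Asymptotics MeasureTheory Complex

section ZetaGrowth

variable {s : ℂ} {δ : ℝ}

theorem hasDerivAt_ofReal_cpow {x : ℝ} (hx : 0 < x) (s : ℂ) :
    HasDerivAt (fun y : ℝ ↦ (y : ℂ) ^ s) (s * (x : ℂ) ^ (s - 1)) x := by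
  rcases eq_or_ne s 0 with rfl | hs
  · simpa using hasDerivAt_const x (1 : ℂ)
  · exact hasDerivAt_ofReal_cpow_const hx.ne' hs

theorem norm_cpow_neg_sub_cpow_neg_le_norm_mul (hs : 0 ≤ s.re) {a x : ℝ} (ha : 0 < a)
    (hx : x ∈ Set.Icc a (a + 1)) :
    ‖(a : ℂ) ^ (-s) - (x : ℂ) ^ (-s)‖ ≤ ‖s‖ * a ^ (-s.re - 1) := by
  have hderiv_le : ∀ y ∈ Set.Icc a (a + 1),
      ‖-s * (y : ℂ) ^ (-s - 1)‖ ≤ ‖s‖ * a ^ (-s.re - 1) := by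
    intro y hy
    rw [norm_mul, norm_neg, norm_cpow_eq_rpow_re_of_pos (ha.trans_le hy.1)]
    gcongr
    exact Real.rpow_le_rpow_of_nonpos ha hy.1 (by simp; linarith)
  have hmvt := (convex_Icc a (a + 1)).norm_image_sub_le_of_norm_hasDerivWithin_le
    (fun y hy ↦ (hasDerivAt_ofReal_cpow (ha.trans_le hy.1) (-s)).hasDerivWithinAt)
    hderiv_le hx (Set.left_mem_Icc.2 (by linarith))
  refine hmvt.trans (mul_le_of_le_one_right (by positivity) ?_)
  rw [Real.norm_eq_abs, abs_le]
  constructor <;> linarith [hx.1, hx.2]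

theorem norm_cpow_neg_sub_cpow_neg_le_two_mul (hs : 0 ≤ s.re) {a x : ℝ} (ha : 0 < a)
    (hx : a ≤ x) : ‖(a : ℂ) ^ (-s) - (x : ℂ) ^ (-s)‖ ≤ 2 * a ^ (-s.re) := by
  refine (norm_sub_le _ _).trans ?_
  rw [norm_cpow_eq_rpow_re_of_pos ha, norm_cpow_eq_rpow_re_of_pos (ha.trans_le hx), neg_re]
  linarith [Real.rpow_le_rpow_of_nonpos ha hx (neg_nonpos.2 hs)]

/-- Interpolates between the mean value bound (`δ = 1`) and the triangle inequality (`δ = 0`). -/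
theorem norm_cpow_neg_sub_cpow_neg_le (hs : 0 ≤ s.re) (hδ : δ ∈ Set.Icc 0 1) {a x : ℝ} (ha : 0 < a)
    (hx : x ∈ Set.Icc a (a + 1)) :
    ‖(a : ℂ) ^ (-s) - (x : ℂ) ^ (-s)‖ ≤ 2 * ‖s‖ ^ δ * a ^ (-s.re - δ) := by
  set d := ‖(a : ℂ) ^ (-s) - (x : ℂ) ^ (-s)‖
  have hδ' : 0 ≤ 1 - δ := sub_nonneg.2 hδ.2
  calc d = d ^ δ * d ^ (1 - δ) := by
        rw [← Real.rpow_add_of_nonneg (norm_nonneg _) hδ.1 hδ', add_sub_cancel, Real.rpow_one]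
    _ ≤ (‖s‖ * a ^ (-s.re - 1)) ^ δ * (2 * a ^ (-s.re)) ^ (1 - δ) := by
        have := norm_cpow_neg_sub_cpow_neg_le_norm_mul hs ha hx
        have := norm_cpow_neg_sub_cpow_neg_le_two_mul hs ha hx.1
        have := hδ.1
        gcongr
    _ = 2 ^ (1 - δ) * ‖s‖ ^ δ * a ^ (-s.re - δ) := by
        rw [Real.mul_rpow (norm_nonneg _) (by positivity),
          Real.mul_rpow zero_le_two (by positivity), ← Real.rpow_mul ha.le, ← Real.rpow_mul ha.le,
          show -s.re - δ = (-s.re - 1) * δ + -s.re * (1 - δ) by ring, Real.rpow_add ha]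
        ring
    _ ≤ 2 * ‖s‖ ^ δ * a ^ (-s.re - δ) := by
        gcongr
        exact Real.rpow_le_self_of_one_le one_le_two (by linarith [hδ.1])

/-- The `n`-th term `(s - 1) * ∫ x in n+1..n+2, ((n+1) ^ (-s) - x ^ (-s))` of the series for
`(s - 1) * ζ(s) - 1` that converges on `0 < re s`, with the integral evaluated. -/
noncomputable def zetaCorrection (s : ℂ) (n : ℕ) : ℂ :=
  (s - 1) * (n + 1 : ℂ) ^ (-s) - ((n + 1 : ℂ) ^ (1 - s) - (n + 2 : ℂ) ^ (1 - s))

theorem norm_zetaCorrection_le (hs : 0 ≤ s.re) (hδ : δ ∈ Set.Icc 0 1) (n : ℕ) :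
    ‖zetaCorrection s n‖ ≤ ‖s - 1‖ * (2 * ‖s‖ ^ δ * (n + 1 : ℝ) ^ (-s.re - δ)) := by
  set a : ℝ := n + 1 with ha
  have ha0 : 0 < a := by positivity
  have hderiv : ∀ y ∈ Set.Icc a (a + 1), HasDerivWithinAt
      (fun y : ℝ ↦ (s - 1) * (a : ℂ) ^ (-s) * y + (y : ℂ) ^ (1 - s))
      ((s - 1) * ((a : ℂ) ^ (-s) - (y : ℂ) ^ (-s))) (Set.Icc a (a + 1)) y := by
    intro y hy
    have := ((ofRealCLM.hasDerivAt (x := y)).const_mul ((s - 1) * (a : ℂ) ^ (-s))).add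
      (hasDerivAt_ofReal_cpow (ha0.trans_le hy.1) (1 - s))
    refine (this.congr_deriv ?_).hasDerivWithinAt
    rw [sub_sub_cancel_left, ofRealCLM_apply, ofReal_one]
    ring
  have hmvt := (convex_Icc a (a + 1)).norm_image_sub_le_of_norm_hasDerivWithin_le hderiv
    (fun y hy ↦ (norm_mul_le _ _).trans
      (mul_le_mul_of_nonneg_left (norm_cpow_neg_sub_cpow_neg_le hs hδ ha0 hy) (norm_nonneg _)))
    (Set.left_mem_Icc.2 (by linarith)) (Set.right_mem_Icc.2 (by linarith))
  rw [add_sub_cancel_left, norm_one, mul_one] at hmvt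
  convert! hmvt using 2
  simp only [zetaCorrection, ha]
  push_cast
  ring_nf

theorem sum_range_zetaCorrection (s : ℂ) (N : ℕ) : ∑ n ∈ Finset.range N, zetaCorrection s n =
    (s - 1) * ∑ n ∈ Finset.range N, (n + 1 : ℂ) ^ (-s) - 1 + (N + 1 : ℂ) ^ (1 - s) := by
  induction N with
  | zero => simp
  | succ N ih =>
    rw [Finset.sum_range_succ, ih, Finset.sum_range_succ, zetaCorrection]
    push_cast
    rw [show (N + 1 + 1 : ℂ) = N + 2 by ring]
    ring

theorem summable_nat_add_one_rpow {p : ℝ} (hp : p < -1) :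
    Summable fun n : ℕ ↦ (n + 1 : ℝ) ^ p := by
  simpa using (summable_nat_add_iff 1).2 (Real.summable_nat_rpow.2 hp)

theorem summable_zetaCorrection (hs : 0 < s.re) : Summable (zetaCorrection s) :=
  .of_norm_bounded (((summable_nat_add_one_rpow (by linarith)).mul_left _).mul_left _)
    (norm_zetaCorrection_le hs.le (Set.right_mem_Icc.2 zero_le_one))

theorem differentiable_zetaCorrection (n : ℕ) : Differentiable ℂ (zetaCorrection · n) := by
  have hne : (n + 1 : ℂ) ≠ 0 := n.cast_add_one_ne_zero
  have hne' : (n + 2 : ℂ) ≠ 0 := mod_cast (n + 1).succ_ne_zero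
  unfold zetaCorrection
  intro s
  exact (DifferentiableAt.mul (by fun_prop) (.const_cpow (by fun_prop) (.inl hne))).sub
    ((DifferentiableAt.const_cpow (by fun_prop) (.inl hne)).sub
      (.const_cpow (by fun_prop) (.inl hne')))

theorem differentiableOn_tsum_zetaCorrection :
    DifferentiableOn ℂ (fun s ↦ ∑' n, zetaCorrection s n) {s | 0 < s.re} := by
  intro s (hs : 0 < s.re)
  set U : Set ℂ := {z | s.re / 2 < z.re} ∩ Metric.ball s 1
  have hU : IsOpen U := (isOpen_lt continuous_const continuous_re).inter Metric.isOpen_ball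
  have hsU : s ∈ U := ⟨half_lt_self hs, Metric.mem_ball_self one_pos⟩
  suffices DifferentiableOn ℂ (fun s ↦ ∑' n, zetaCorrection s n) U from
    (this.differentiableAt (hU.mem_nhds hsU)).differentiableWithinAt
  refine differentiableOn_tsum_of_summable_norm
    (u := fun n : ℕ ↦ (‖s‖ + 2) * (2 * (‖s‖ + 1) ^ (1 : ℝ) * (n + 1 : ℝ) ^ (-(s.re / 2) - 1)))
    (((summable_nat_add_one_rpow (by linarith)).mul_left _).mul_left _)
    (fun n ↦ (differentiable_zetaCorrection n).differentiableOn) hU fun n z ⟨hz, hzs⟩ ↦ ?_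
  have hz' : s.re / 2 < z.re := hz
  have hz_norm : ‖z‖ ≤ ‖s‖ + 1 := by
    linarith [norm_le_norm_add_norm_sub' z s, mem_ball_iff_norm.1 hzs]
  have hz_sub : ‖z - 1‖ ≤ ‖s‖ + 2 := by
    linarith [norm_sub_le z 1, norm_one (α := ℂ)]
  refine (norm_zetaCorrection_le (by linarith) (Set.right_mem_Icc.2 zero_le_one) n).trans ?_
  gcongr
  linarith [n.cast_nonneg (α := ℝ)]

theorem tendsto_natCast_add_one_cpow_one_sub (hs : 1 < s.re) :
    Tendsto (fun N : ℕ ↦ (N + 1 : ℂ) ^ (1 - s)) atTop (𝓝 0) := by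
  rw [tendsto_zero_iff_norm_tendsto_zero]
  have : Tendsto (fun N : ℕ ↦ ((N + 1 : ℕ) : ℝ) ^ (-(s.re - 1))) atTop (𝓝 0) :=
    ((tendsto_rpow_neg_atTop (by linarith)).comp tendsto_natCast_atTop_atTop).comp
      (tendsto_add_atTop_nat 1)
  refine this.congr fun N ↦ ?_
  rw [← Nat.cast_add_one, norm_natCast_cpow_of_pos N.succ_pos]
  simp

theorem riemannZeta₁_eq_one_add_tsum_of_one_lt_re (hs : 1 < s.re) :
    riemannZeta₁ s = 1 + ∑' n, zetaCorrection s n := by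
  have hs1 : s ≠ 1 := by rintro rfl; simp at hs
  have hsum : Summable fun n : ℕ ↦ (n + 1 : ℂ) ^ (-s) := by
    simpa [cpow_neg] using (summable_nat_add_iff 1).2 (summable_one_div_nat_cpow.2 hs)
  have hζ : riemannZeta₁ s = (s - 1) * ∑' n : ℕ, (n + 1 : ℂ) ^ (-s) := by
    have := zeta_eq_tsum_one_div_nat_add_one_cpow hs
    simp only [one_div, ← cpow_neg] at this
    rw [← this, riemannZeta_eq_inv_sub_mul hs1, mul_inv_cancel_left₀ (sub_ne_zero.2 hs1)]
  have hlim : Tendsto (fun N ↦ ∑ n ∈ Finset.range N, zetaCorrection s n) atTop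
      (𝓝 (riemannZeta₁ s - 1 + 0)) := by
    simp_rw [sum_range_zetaCorrection, hζ]
    exact ((hsum.hasSum.tendsto_sum_nat.const_mul _).sub_const _).add
      (tendsto_natCast_add_one_cpow_one_sub hs)
  linear_combination
    tendsto_nhds_unique hlim (summable_zetaCorrection (by linarith)).hasSum.tendsto_sum_nat

theorem riemannZeta₁_eq_one_add_tsum (hs : 0 < s.re) :
    riemannZeta₁ s = 1 + ∑' n, zetaCorrection s n := by
  have hU : IsOpen {s : ℂ | 0 < s.re} := isOpen_lt continuous_const continuous_re
  have hV : IsOpen {s : ℂ | 1 < s.re} := isOpen_lt continuous_const continuous_re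
  have hζ₁ := differentiable_riemannZeta₁.differentiableOn.analyticOnNhd hU
  have hseries :=
    ((differentiableOn_const 1).add differentiableOn_tsum_zetaCorrection).analyticOnNhd hU
  refine hζ₁.eqOn_of_preconnected_of_eventuallyEq hseries
    (convex_halfSpace_re_gt 0).isPreconnected (z₀ := 2) (by simp) ?_ hs
  filter_upwards [hV.mem_nhds (show (1 : ℝ) < (2 : ℂ).re by simp)] with z hz
  exact riemannZeta₁_eq_one_add_tsum_of_one_lt_re hz

theorem exists_norm_riemannZeta₀_le (hδ : δ ∈ Set.Ioc 0 1) :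
    ∃ C > 0, ∀ s : ℂ, 1 - δ / 2 ≤ s.re → ‖riemannZeta₀ s‖ ≤ C * ‖s‖ ^ δ := by
  have hδ0 := hδ.1
  have hsum := summable_nat_add_one_rpow (show -1 - δ / 2 < -1 by linarith)
  set C := 2 * ∑' n : ℕ, (n + 1 : ℝ) ^ (-1 - δ / 2)
  have hbound_ne : ∀ s : ℂ, s ≠ 1 → 1 - δ / 2 ≤ s.re → ‖riemannZeta₀ s‖ ≤ C * ‖s‖ ^ δ := by
    intro s hs1 hs
    have hre : 0 < s.re := by linarith [hδ.2]
    refine le_of_mul_le_mul_left ?_ (norm_pos_iff.2 (sub_ne_zero.2 hs1))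
    have hζ : (s - 1) * riemannZeta₀ s = ∑' n, zetaCorrection s n := by
      have := riemannZeta₁_eq_one_add_tsum hre
      rwa [riemannZeta₁, add_right_inj] at this
    rw [← norm_mul, hζ, mul_right_comm, ← tsum_mul_left, ← tsum_mul_left]
    refine tsum_of_norm_bounded ((hsum.mul_left _).mul_left _).hasSum fun n ↦ ?_
    refine (norm_zetaCorrection_le hre.le ⟨hδ0.le, hδ.2⟩ n).trans ?_
    gcongr _ * (_ * ?_)
    exact Real.rpow_le_rpow_of_exponent_le (by simp) (by linarith)
  refine ⟨C, mul_pos two_pos (hsum.tsum_pos (fun n ↦ by positivity) 0 (by positivity)),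
    fun s hs ↦ ?_⟩
  rcases ne_or_eq s 1 with hs1 | rfl
  · exact hbound_ne s hs1 hs
  have hnear : ∀ᶠ z : ℂ in 𝓝[≠] 1, 1 - δ / 2 ≤ z.re :=
    ((continuous_re.tendsto 1).eventually (eventually_ge_nhds (by simpa))).filter_mono inf_le_left
  have hcont : Continuous fun z : ℂ ↦ C * ‖z‖ ^ δ :=
    continuous_const.mul (continuous_norm.rpow_const fun _ ↦ .inr hδ0.le)
  refine le_of_tendsto_of_tendsto
    (differentiable_riemannZeta₀.continuous.norm.continuousWithinAt (s := {1}ᶜ) (x := 1))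
    (hcont.continuousWithinAt (s := {1}ᶜ)) ?_
  filter_upwards [hnear, self_mem_nhdsWithin] with z hz hz1 using hbound_ne z hz1 hz

end ZetaGrowth

section ZetaLowerBound

variable {s z : ℂ} {δ : ℝ}

theorem norm_le_two_mul_of_norm_sub_le {E : Type*} [SeminormedAddCommGroup E] {x y : E}
    (h : ‖y - x‖ ≤ ‖x‖) : ‖y‖ ≤ 2 * ‖x‖ := by
  linarith [norm_le_norm_add_norm_sub' y x]

theorem rpow_le_two_mul_rpow (hδ : δ ∈ Set.Icc 0 1) {a b : ℝ} (ha : 0 ≤ a) (hab : a ≤ 2 * b) :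
    a ^ δ ≤ 2 * b ^ δ := by
  have hδ0 := hδ.1
  have hb : 0 ≤ b := by linarith
  calc a ^ δ ≤ (2 * b) ^ δ := by gcongr
    _ = 2 ^ δ * b ^ δ := Real.mul_rpow zero_le_two hb
    _ ≤ 2 * b ^ δ := by
        gcongr
        exact Real.rpow_le_self_of_one_le one_le_two hδ.2

theorem one_le_norm_of_one_le_re (hs : 1 ≤ s.re) : 1 ≤ ‖s‖ := hs.trans (re_le_norm s)

theorem exists_norm_riemannZeta₀_le_of_mem_closedBall (hδ : δ ∈ Set.Ioc 0 1) :
    ∃ C > 0, ∀ s : ℂ, 1 ≤ s.re → ∀ z ∈ Metric.closedBall s (δ / 2),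
      ‖riemannZeta₀ z‖ ≤ C * ‖s‖ ^ δ := by
  obtain ⟨C, hC, hζ₀⟩ := exists_norm_riemannZeta₀_le hδ
  refine ⟨2 * C, by positivity, fun s hs z hz ↦ ?_⟩
  have hzs : ‖z - s‖ ≤ δ / 2 := mem_closedBall_iff_norm.1 hz
  have hz_norm : ‖z‖ ≤ 2 * ‖s‖ :=
    norm_le_two_mul_of_norm_sub_le (by linarith [hδ.2, one_le_norm_of_one_le_re hs])
  have hz_re : 1 - δ / 2 ≤ z.re := by
    have := (abs_le.1 ((abs_re_le_norm (z - s)).trans hzs)).1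
    rw [sub_re] at this
    linarith
  calc ‖riemannZeta₀ z‖ ≤ C * ‖z‖ ^ δ := hζ₀ z hz_re
    _ ≤ C * (2 * ‖s‖ ^ δ) := by
      gcongr
      exact rpow_le_two_mul_rpow ⟨hδ.1.le, hδ.2⟩ (norm_nonneg z) hz_norm
    _ = 2 * C * ‖s‖ ^ δ := by ring

theorem exists_norm_riemannZeta₁_le (hδ : δ ∈ Set.Ioc 0 1) :
    ∃ C > 0, ∀ s : ℂ, 1 ≤ s.re → ∀ z ∈ Metric.closedBall s (δ / 2),
      ‖riemannZeta₁ z‖ ≤ C * (‖s‖ * ‖s‖ ^ δ) := by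
  obtain ⟨C, hC, hζ₀⟩ := exists_norm_riemannZeta₀_le_of_mem_closedBall hδ
  refine ⟨1 + 3 * C, by positivity, fun s hs z hz ↦ ?_⟩
  have hs1 := one_le_norm_of_one_le_re hs
  have hz_sub : ‖z - 1‖ ≤ 3 * ‖s‖ := by
    linarith [norm_le_norm_add_norm_sub' z s, mem_closedBall_iff_norm.1 hz, hδ.2,
      norm_sub_le z 1, norm_one (α := ℂ)]
  calc ‖riemannZeta₁ z‖ ≤ 1 + ‖z - 1‖ * ‖riemannZeta₀ z‖ := by
        simpa [riemannZeta₁] using norm_add_le 1 ((z - 1) * riemannZeta₀ z)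
    _ ≤ ‖s‖ * ‖s‖ ^ δ + 3 * ‖s‖ * (C * ‖s‖ ^ δ) := by
        gcongr
        · exact one_le_mul_of_one_le_of_one_le hs1 (Real.one_le_rpow hs1 hδ.1.le)
        · exact hζ₀ s hs z hz
    _ = (1 + 3 * C) * (‖s‖ * ‖s‖ ^ δ) := by ring

theorem exists_norm_deriv_riemannZeta₁_le (hδ : δ ∈ Set.Ioc 0 1) :
    ∃ C > 0, ∀ s : ℂ, 1 ≤ s.re → ∀ z ∈ Metric.closedBall s (δ / 4),
      ‖deriv riemannZeta₁ z‖ ≤ C * (‖s‖ * ‖s‖ ^ δ) := by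
  obtain ⟨C, hC, hζ₁⟩ := exists_norm_riemannZeta₁_le hδ
  have hδ4 : 0 < δ / 4 := by linarith [hδ.1]
  refine ⟨C / (δ / 4), by positivity, fun s hs z hz ↦ ?_⟩
  rw [div_mul_eq_mul_div]
  refine norm_deriv_le_of_forall_mem_sphere_norm_le hδ4 differentiable_riemannZeta₁.diffContOnCl
    fun w hw ↦ hζ₁ s hs w ?_
  rw [Metric.mem_closedBall] at hz ⊢
  linarith [dist_triangle w z s, Metric.mem_sphere.1 hw]

theorem riemannZeta₁_ne_zero_of_one_le_re (hs : 1 ≤ s.re) : riemannZeta₁ s ≠ 0 := by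
  rcases eq_or_ne s 1 with rfl | hs1
  · simp
  · intro h
    exact riemannZeta_ne_zero_of_one_le_re hs (by rw [riemannZeta_eq_inv_sub_mul hs1, h, mul_zero])

theorem riemannZeta₁_three_four_one {x y : ℝ} (hx : 0 < x) :
    x ^ 3 * ‖(x + I * y : ℂ)‖ ^ 4 * ‖(x + 2 * I * y : ℂ)‖ ≤
      ‖riemannZeta₁ (1 + x)‖ ^ 3 * ‖riemannZeta₁ (1 + x + I * y)‖ ^ 4 *
        ‖riemannZeta₁ (1 + x + 2 * I * y)‖ := by
  have hζ : 1 ≤ ‖riemannZeta (1 + x)‖ ^ 3 * ‖riemannZeta (1 + x + I * y)‖ ^ 4 *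
      ‖riemannZeta (1 + x + 2 * I * y)‖ := by
    simpa [DirichletCharacter.LFunctionTrivChar] using
      DirichletCharacter.norm_LFunction_product_ge_one (N := 1) 1 hx y
  have hζ₁ : ∀ w : ℂ, 0 < w.re →
      0 < ‖w‖ ∧ ‖riemannZeta (1 + w)‖ = ‖riemannZeta₁ (1 + w)‖ / ‖w‖ := by
    intro w hw
    have hw0 : w ≠ 0 := by rintro rfl; simp at hw
    refine ⟨norm_pos_iff.2 hw0, ?_⟩
    rw [riemannZeta_eq_inv_sub_mul (by simpa), norm_mul, norm_inv, add_sub_cancel_left,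
      div_eq_inv_mul]
  obtain ⟨h₀, e₀⟩ := hζ₁ x (by simpa)
  obtain ⟨h₁, e₁⟩ := hζ₁ (x + I * y) (by simpa)
  obtain ⟨h₂, e₂⟩ := hζ₁ (x + 2 * I * y) (by simpa)
  rw [add_assoc 1 (x : ℂ), add_assoc 1 (x : ℂ)] at hζ ⊢
  rw [e₀, e₁, e₂, div_pow, div_pow, div_mul_div_comm, div_mul_div_comm, one_le_div (by positivity),
    norm_real, Real.norm_of_nonneg hx.le] at hζ
  exact hζ

theorem exists_norm_riemannZeta₁_le_of_norm_le_two_mul (hδ : δ ∈ Set.Ioc 0 1) :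
    ∃ C > 0, ∀ (w : ℂ) (b : ℝ), 1 ≤ w.re → ‖w‖ ≤ 2 * b → ‖riemannZeta₁ w‖ ≤ C * (b * b ^ δ) := by
  obtain ⟨C, hC, hζ₁⟩ := exists_norm_riemannZeta₁_le hδ
  refine ⟨4 * C, by positivity, fun w b hw hwb ↦ ?_⟩
  have hb : 0 ≤ b := by linarith [norm_nonneg w]
  calc ‖riemannZeta₁ w‖ ≤ C * (‖w‖ * ‖w‖ ^ δ) :=
        hζ₁ w hw w (Metric.mem_closedBall_self (by linarith [hδ.1]))
    _ ≤ C * (2 * b * (2 * b ^ δ)) := by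
        gcongr
        exact rpow_le_two_mul_rpow ⟨hδ.1.le, hδ.2⟩ (norm_nonneg w) hwb
    _ = 4 * C * (b * b ^ δ) := by ring

theorem exists_re_sub_one_pow_mul_le_norm_riemannZeta₁ (hδ : δ ∈ Set.Ioc 0 1) :
    ∃ c > 0, ∀ s : ℂ, 1 < s.re → s.re ≤ 2 → 1 ≤ |s.im| →
      c * ((s.re - 1) ^ 3 * ‖s‖ ^ 4) ≤ ‖s‖ ^ δ * ‖riemannZeta₁ s‖ ^ 4 := by
  obtain ⟨C, hC, hup⟩ := exists_norm_riemannZeta₁_le_of_norm_le_two_mul hδ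
  refine ⟨(3 ^ 5 * C ^ 4)⁻¹, by positivity, fun s hs hs2 him ↦ ?_⟩
  have hx : 0 < s.re - 1 := by linarith
  have h341 := riemannZeta₁_three_four_one (y := s.im) hx
  set x := s.re - 1
  have hs_norm : ‖s‖ ≤ 3 * |s.im| := by
    linarith [norm_le_abs_re_add_abs_im s, abs_of_pos (one_pos.trans hs)]
  have hs_eq : (1 + x + I * s.im : ℂ) = s := by apply Complex.ext <;> simp [x]
  have hlow₁ : ‖s‖ / 3 ≤ ‖(x + I * s.im : ℂ)‖ := by
    have := abs_im_le_norm (x + I * s.im : ℂ)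
    simp only [add_im, ofReal_im, I_mul_im, ofReal_re, zero_add] at this
    linarith
  have hlow₂ : ‖s‖ / 3 ≤ ‖(x + 2 * I * s.im : ℂ)‖ := by
    have := abs_im_le_norm (x + 2 * I * s.im : ℂ)
    rw [show (x + 2 * I * s.im : ℂ).im = 2 * s.im by simp, abs_mul, abs_two] at this
    linarith
  have hup₀ : ‖riemannZeta₁ (1 + x)‖ ≤ C := by
    have hnorm : ‖(1 + x : ℂ)‖ ≤ 2 * 1 := by
      rw [← ofReal_one, ← ofReal_add, norm_real, Real.norm_of_nonneg (by linarith)]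
      linarith
    simpa using hup (1 + x) 1 (by simpa using hx.le) hnorm
  have hup₂ : ‖riemannZeta₁ (1 + x + 2 * I * s.im)‖ ≤ C * (‖s‖ * ‖s‖ ^ δ) := by
    refine hup _ ‖s‖ (by simpa using hx.le) (norm_le_two_mul_of_norm_sub_le ?_)
    rw [show 1 + x + 2 * I * s.im - s = I * s.im by linear_combination hs_eq]
    simpa using abs_im_le_norm s
  rw [hs_eq] at h341
  have key : x ^ 3 * (‖s‖ / 3) ^ 4 * (‖s‖ / 3) ≤
      C ^ 3 * ‖riemannZeta₁ s‖ ^ 4 * (C * (‖s‖ * ‖s‖ ^ δ)) :=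
    (by gcongr : _ ≤ _).trans (h341.trans (by gcongr))
  have hs0 : 0 < ‖s‖ := one_pos.trans_le (one_le_norm_of_one_le_re hs.le)
  rw [inv_mul_le_iff₀ (by positivity)]
  refine le_of_mul_le_mul_left ?_ hs0
  linear_combination 3 ^ 5 * key

theorem exists_norm_riemannZeta₁_sub_le (hδ : δ ∈ Set.Ioc 0 1) :
    ∃ C > 0, ∀ a ∈ Set.Ioc 0 (δ / 4), ∀ s : ℂ, 1 ≤ s.re →
      ∀ z ∈ Metric.closedBall s (a / (‖s‖ ^ δ) ^ 5),
        (‖s‖ ^ δ) ^ 4 * ‖riemannZeta₁ z - riemannZeta₁ s‖ ≤ C * a * ‖s‖ := by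
  obtain ⟨C, hC, hderiv⟩ := exists_norm_deriv_riemannZeta₁_le hδ
  refine ⟨C, hC, fun a ha s hs z hz ↦ ?_⟩
  have hs1 := one_le_norm_of_one_le_re hs
  have hderiv_s := hderiv s hs
  set q := ‖s‖ ^ δ
  have hq : 1 ≤ q := Real.one_le_rpow hs1 hδ.1.le
  have hza : z ∈ Metric.closedBall s (δ / 4) :=
    Metric.closedBall_subset_closedBall ((div_le_self ha.1.le (one_le_pow₀ hq)).trans ha.2) hz
  have hmvt := (convex_closedBall s (δ / 4)).norm_image_sub_le_of_norm_deriv_le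
    (fun w _ ↦ differentiable_riemannZeta₁ w) hderiv_s
    (Metric.mem_closedBall_self (by linarith [hδ.1])) hza
  calc q ^ 4 * ‖riemannZeta₁ z - riemannZeta₁ s‖ ≤ q ^ 4 * (C * (‖s‖ * q) * (a / q ^ 5)) := by
        gcongr
        exact hmvt.trans (by gcongr; exact mem_closedBall_iff_norm.1 hz)
    _ = C * a * ‖s‖ := by field_simp

theorem norm_le_norm_add_ofReal (hs : 0 ≤ s.re) {x : ℝ} (hx : 0 ≤ x) : ‖s‖ ≤ ‖s + x‖ := by
  rw [norm_def, norm_def]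
  refine Real.sqrt_le_sqrt ?_
  rw [normSq_apply, normSq_apply, add_re, add_im, ofReal_re, ofReal_im, add_zero]
  nlinarith

theorem exists_norm_pow_le_norm_riemannZeta₁_add (hδ : δ ∈ Set.Ioc 0 1) :
    ∃ c > 0, ∀ a ∈ Set.Ioc (0 : ℝ) (1 / 2), ∀ s : ℂ, 1 ≤ s.re → s.re ≤ 3 / 2 → 1 ≤ |s.im| →
      c * (a ^ 3 * ‖s‖ ^ 4) ≤
        ((‖s‖ ^ δ) ^ 4 * ‖riemannZeta₁ (s + (a / (‖s‖ ^ δ) ^ 5 : ℝ))‖) ^ 4 := by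
  obtain ⟨c, hc, h341⟩ := exists_re_sub_one_pow_mul_le_norm_riemannZeta₁ hδ
  refine ⟨c / 2, by positivity, fun a ha s hs hs2 him ↦ ?_⟩
  have hs1 := one_le_norm_of_one_le_re hs
  set q := ‖s‖ ^ δ
  have hq : 1 ≤ q := Real.one_le_rpow hs1 hδ.1.le
  set η := a / q ^ 5
  have ha0 := ha.1
  have hη : 0 < η := by positivity
  have hηa : η ≤ a := div_le_self ha.1.le (one_le_pow₀ hq)
  set w : ℂ := s + η
  have hw_re : w.re = s.re + η := by simp [w]
  have hw_im : w.im = s.im := by simp [w]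
  have hηw : η ≤ w.re - 1 := by linarith
  have hw_pos : 0 ≤ w.re - 1 := hη.le.trans hηw
  have hsw : ‖s‖ ≤ ‖w‖ := norm_le_norm_add_ofReal (by linarith) hη.le
  have hws : ‖w - s‖ = η := by simp [w, abs_of_pos hη]
  have hwq : ‖w‖ ^ δ ≤ 2 * q :=
    rpow_le_two_mul_rpow ⟨hδ.1.le, hδ.2⟩ (norm_nonneg w)
      (norm_le_two_mul_of_norm_sub_le (by linarith [ha.2]))
  have hη_lower : c * (η ^ 3 * ‖s‖ ^ 4) ≤ 2 * q * ‖riemannZeta₁ w‖ ^ 4 :=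
    calc c * (η ^ 3 * ‖s‖ ^ 4) ≤ c * ((w.re - 1) ^ 3 * ‖w‖ ^ 4) := by gcongr
      _ ≤ ‖w‖ ^ δ * ‖riemannZeta₁ w‖ ^ 4 :=
        h341 w (by linarith) (by linarith [ha.2]) (by rwa [hw_im])
      _ ≤ 2 * q * ‖riemannZeta₁ w‖ ^ 4 := by gcongr
  calc c / 2 * (a ^ 3 * ‖s‖ ^ 4) = q ^ 15 * (c * (η ^ 3 * ‖s‖ ^ 4)) / 2 := by
        simp only [η]; field_simp
    _ ≤ q ^ 15 * (2 * q * ‖riemannZeta₁ w‖ ^ 4) / 2 := by gcongr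
    _ = (q ^ 4 * ‖riemannZeta₁ w‖) ^ 4 := by ring

/-- The point `w` to the right of `s` at distance about `‖s‖ ^ (-5 * δ)` balances the loss of a
factor `(w.re - 1) ^ 3` in the 3-4-1 inequality at `w` against the variation of `riemannZeta₁`
between `s` and `w`. -/
theorem exists_norm_le_norm_riemannZeta₁_of_one_le_abs_im (hδ : δ ∈ Set.Ioc 0 1) :
    ∃ c > 0, ∀ s : ℂ, 1 ≤ s.re → s.re ≤ 3 / 2 → 1 ≤ |s.im| →
      c * ‖s‖ ≤ (‖s‖ ^ δ) ^ 4 * ‖riemannZeta₁ s‖ := by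
  obtain ⟨C, hC, hsub⟩ := exists_norm_riemannZeta₁_sub_le hδ
  obtain ⟨c, hc, hadd⟩ := exists_norm_pow_le_norm_riemannZeta₁_add hδ
  set a := min (δ / 4) (c / (2 * C) ^ 4)
  have hδ0 := hδ.1
  have ha : 0 < a := by positivity
  have haδ : a ≤ δ / 4 := min_le_left _ _
  have hac : (2 * C) ^ 4 * a ≤ c := by
    rw [mul_comm, ← le_div_iff₀ (by positivity)]
    exact min_le_right _ _
  refine ⟨C * a, by positivity, fun s hs hs2 him ↦ ?_⟩
  have hw := hadd a ⟨ha, by linarith [hδ.2]⟩ s hs hs2 him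
  set q := ‖s‖ ^ δ
  set η := a / q ^ 5
  set w : ℂ := s + (η : ℝ)
  have hws : w ∈ Metric.closedBall s η := by
    simp [w, dist_eq_norm, abs_of_nonneg (show 0 ≤ η by positivity)]
  have hw_lower : 2 * (C * a * ‖s‖) ≤ q ^ 4 * ‖riemannZeta₁ w‖ := by
    refine le_of_pow_le_pow_left₀ four_ne_zero (by positivity) (le_trans ?_ hw)
    calc (2 * (C * a * ‖s‖)) ^ 4 = (2 * C) ^ 4 * a * (a ^ 3 * ‖s‖ ^ 4) := by ring
      _ ≤ c * (a ^ 3 * ‖s‖ ^ 4) := by gcongr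
  have hw_sub : q ^ 4 * (‖riemannZeta₁ w‖ - ‖riemannZeta₁ s‖) ≤ C * a * ‖s‖ :=
    (mul_le_mul_of_nonneg_left (norm_sub_norm_le _ _) (by positivity)).trans
      (hsub a ⟨ha, haδ⟩ s hs w hws)
  linarith

theorem exists_norm_le_norm_riemannZeta₁ (hδ : δ ∈ Set.Ioc 0 1) :
    ∃ c > 0, ∀ s : ℂ, 1 ≤ s.re → s.re ≤ 3 / 2 →
      c * ‖s‖ ≤ (‖s‖ ^ δ) ^ 4 * ‖riemannZeta₁ s‖ := by
  obtain ⟨c, hc, hlarge⟩ := exists_norm_le_norm_riemannZeta₁_of_one_le_abs_im hδ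
  have hcpt : IsCompact (Set.Icc (1 : ℝ) (3 / 2) ×ℂ Set.Icc (-1 : ℝ) 1) :=
    isCompact_Icc.reProdIm isCompact_Icc
  obtain ⟨m, hm, hsmall⟩ := hcpt.exists_forall_le'
    differentiable_riemannZeta₁.continuous.norm.continuousOn (a := 0)
    (fun s hs ↦ norm_pos_iff.2 (riemannZeta₁_ne_zero_of_one_le_re (mem_reProdIm.1 hs).1.1))
  refine ⟨min c (m / 3), by positivity, fun s hs hs2 ↦ ?_⟩
  rcases le_total 1 |s.im| with him | him
  · refine le_trans ?_ (hlarge s hs hs2 him)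
    gcongr
    exact min_le_left _ _
  · have hs_norm : ‖s‖ ≤ 3 := by
      linarith [norm_le_abs_re_add_abs_im s, abs_of_pos (one_pos.trans_le hs)]
    have hq := one_le_pow₀ (n := 4) (Real.one_le_rpow (one_le_norm_of_one_le_re hs) hδ.1.le)
    calc min c (m / 3) * ‖s‖ ≤ m / 3 * 3 := by gcongr; exact min_le_right _ _
      _ = 1 * m := by ring
      _ ≤ (‖s‖ ^ δ) ^ 4 * ‖riemannZeta₁ s‖ := by
        gcongr
        exact hsmall s (mem_reProdIm.2 ⟨⟨hs, hs2⟩, abs_le.1 him⟩)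

theorem exists_norm_le_norm_riemannZeta₁_of_mem_closedBall (hδ : δ ∈ Set.Ioc 0 1) :
    ∃ b ∈ Set.Ioc 0 (δ / 4), ∃ c > 0, ∀ s : ℂ, 1 ≤ s.re → s.re ≤ 3 / 2 →
      ∀ z ∈ Metric.closedBall s (b / (‖s‖ ^ δ) ^ 5),
        c * ‖s‖ ≤ (‖s‖ ^ δ) ^ 4 * ‖riemannZeta₁ z‖ := by
  obtain ⟨c, hc, hlower⟩ := exists_norm_le_norm_riemannZeta₁ hδ
  obtain ⟨D, hD, hsub⟩ := exists_norm_riemannZeta₁_sub_le hδ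
  have hδ0 := hδ.1
  set b := min (δ / 4) (c / (2 * D))
  have hb : b ∈ Set.Ioc 0 (δ / 4) := ⟨by positivity, min_le_left _ _⟩
  have hDb : D * b ≤ c / 2 := calc
    D * b ≤ D * (c / (2 * D)) := by gcongr; exact min_le_right _ _
    _ = c / 2 := by field_simp
  refine ⟨b, hb, c / 2, by positivity, fun s hs hs2 z hz ↦ ?_⟩
  have hvariation : (‖s‖ ^ δ) ^ 4 * (‖riemannZeta₁ s‖ - ‖riemannZeta₁ z‖) ≤ D * b * ‖s‖ :=
    (mul_le_mul_of_nonneg_left ((norm_sub_norm_le _ _).trans_eq (norm_sub_rev _ _))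
      (by positivity)).trans (hsub b hb s hs z hz)
  linarith [hlower s hs hs2, mul_le_mul_of_nonneg_right hDb (norm_nonneg s)]

/-- The function `-ζ'/ζ - ζ`, which is the Dirichlet series of `Λ - 1` on `1 < re s`, written in
terms of `ζ(s) = (s - 1)⁻¹ + riemannZeta₀ s = (s - 1)⁻¹ * riemannZeta₁ s` so that the poles at
`s = 1` are cancelled. -/
noncomputable def zetaLogDerivDefect (s : ℂ) : ℂ :=
  -deriv riemannZeta₁ s / riemannZeta₁ s - riemannZeta₀ s

theorem neg_deriv_riemannZeta_div_sub_riemannZeta (hs1 : s ≠ 1) (hs : riemannZeta₁ s ≠ 0) :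
    -deriv riemannZeta s / riemannZeta s - riemannZeta s = zetaLogDerivDefect s := by
  have hs1' : s - 1 ≠ 0 := sub_ne_zero.2 hs1
  have hζ : riemannZeta s = (s - 1)⁻¹ + riemannZeta₀ s := riemannZeta_eq_inv_sub_add hs1
  rw [zetaLogDerivDefect, deriv_riemannZeta_eq_neg_inv_sub_sq_mul_add hs1,
    eq_sub_of_add_eq' hζ.symm, riemannZeta_eq_inv_sub_mul hs1]
  field_simp
  ring

theorem analyticAt_zetaLogDerivDefect (hs : riemannZeta₁ s ≠ 0) :
    AnalyticAt ℂ zetaLogDerivDefect s :=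
  have hζ₁ := differentiable_riemannZeta₁.analyticAt s
  (hζ₁.deriv.neg.div hζ₁ hs).sub (differentiable_riemannZeta₀.analyticAt s)

theorem exists_norm_zetaLogDerivDefect_le (hδ : δ ∈ Set.Ioc 0 1) :
    ∃ b > 0, ∃ C > 0, ∀ s : ℂ, 1 ≤ s.re → s.re ≤ 3 / 2 →
      ∀ z ∈ Metric.closedBall s (b / (‖s‖ ^ δ) ^ 5),
        riemannZeta₁ z ≠ 0 ∧ ‖zetaLogDerivDefect z‖ ≤ C * (‖s‖ ^ δ) ^ 5 := by
  obtain ⟨b, hb, c, hc, hlower⟩ := exists_norm_le_norm_riemannZeta₁_of_mem_closedBall hδ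
  obtain ⟨D, hD, hderiv⟩ := exists_norm_deriv_riemannZeta₁_le hδ
  obtain ⟨C, hC, hζ₀⟩ := exists_norm_riemannZeta₀_le_of_mem_closedBall hδ
  refine ⟨b, hb.1, D / c + C, by positivity, fun s hs hs2 z hz ↦ ?_⟩
  have hs1 := one_le_norm_of_one_le_re hs
  have hlower_z := hlower s hs hs2 z hz
  set q := ‖s‖ ^ δ
  have hq : 1 ≤ q := Real.one_le_rpow hs1 hδ.1.le
  have hzδ : z ∈ Metric.closedBall s (δ / 4) :=
    Metric.closedBall_subset_closedBall ((div_le_self hb.1.le (one_le_pow₀ hq)).trans hb.2) hz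
  have hζ₁_pos : 0 < ‖riemannZeta₁ z‖ :=
    pos_of_mul_pos_right ((show 0 < c * ‖s‖ by positivity).trans_le hlower_z) (by positivity)
  refine ⟨norm_pos_iff.1 hζ₁_pos, (norm_sub_le _ _).trans ?_⟩
  have hlog : ‖-deriv riemannZeta₁ z / riemannZeta₁ z‖ ≤ D / c * q ^ 5 := by
    rw [norm_div, norm_neg, div_le_iff₀ hζ₁_pos]
    calc ‖deriv riemannZeta₁ z‖ ≤ D * (‖s‖ * q) := hderiv s hs z hzδ
      _ = D / c * q * (c * ‖s‖) := by field_simp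
      _ ≤ D / c * q * (q ^ 4 * ‖riemannZeta₁ z‖) := by gcongr
      _ = D / c * q ^ 5 * ‖riemannZeta₁ z‖ := by ring
  have hζ₀_z : ‖riemannZeta₀ z‖ ≤ C * q ^ 5 :=
    (hζ₀ s hs z (Metric.closedBall_subset_closedBall (by linarith [hδ.1]) hzδ)).trans
      (by gcongr; exact le_self_pow₀ hq (by simp))
  linarith

theorem exists_norm_iteratedDeriv_zetaLogDerivDefect_le (k : ℕ) {η : ℝ} (hη : η ∈ Set.Ioc 0 1) :
    ∃ C > 0, ∀ s : ℂ, 1 ≤ s.re → s.re ≤ 3 / 2 →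
      ‖iteratedDeriv k zetaLogDerivDefect s‖ ≤ C * ‖s‖ ^ η := by
  set δ := η / (5 + 5 * k) with hδ_def
  have hη0 := hη.1
  have hδ : δ ∈ Set.Ioc 0 1 :=
    ⟨by positivity, div_le_one_of_le₀ (by linarith [hη.2, k.cast_nonneg (α := ℝ)]) (by positivity)⟩
  obtain ⟨b, hb, C, hC, hdefect⟩ := exists_norm_zetaLogDerivDefect_le hδ
  refine ⟨k.factorial * C / b ^ k, by positivity, fun s hs hs2 ↦ ?_⟩
  have hs0 : 0 < ‖s‖ := one_pos.trans_le (one_le_norm_of_one_le_re hs)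
  have hball := hdefect s hs hs2
  have hqη : ‖s‖ ^ η = (‖s‖ ^ δ) ^ (5 + 5 * k) := by
    rw [← Real.rpow_natCast, ← Real.rpow_mul (norm_nonneg s), hδ_def]
    push_cast
    field_simp
  set q := ‖s‖ ^ δ
  have hq : 0 < q := by positivity
  have hρ : 0 < b / q ^ 5 := by positivity
  have hdiff : DiffContOnCl ℂ zetaLogDerivDefect (Metric.ball s (b / q ^ 5)) := by
    refine DifferentiableOn.diffContOnCl fun z hz ↦ ?_
    rw [closure_ball _ hρ.ne'] at hz
    exact (analyticAt_zetaLogDerivDefect (hball z hz).1).differentiableAt.differentiableWithinAt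
  refine (norm_iteratedDeriv_le_of_forall_mem_sphere_norm_le k hρ hdiff
    fun z hz ↦ (hball z (Metric.sphere_subset_closedBall hz)).2).trans_eq ?_
  rw [hqη, div_pow, ← pow_mul, pow_add]
  field_simp

end ZetaLowerBound

section RieszPerron

theorem re_add_ofReal_mul_I (σ y : ℝ) : ((σ : ℂ) + y * I).re = σ := by simp

theorem norm_one_add_mul_I_le {σ : ℝ} (hσ : 1 ≤ σ) (y : ℝ) :
    ‖(1 : ℂ) + y * I‖ ≤ ‖(σ : ℂ) + y * I‖ := by
  rw [← ofReal_one, norm_add_mul_I, norm_add_mul_I]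
  gcongr

theorem one_add_abs_le_norm_add_mul_I {σ : ℝ} (hσ : 0 < σ) (y : ℝ) :
    1 + |y| ≤ (1 + σ⁻¹) * ‖(σ : ℂ) + y * I‖ := by
  have hre : σ ≤ ‖(σ : ℂ) + y * I‖ := by simpa using re_le_norm ((σ : ℂ) + y * I)
  have him : |y| ≤ ‖(σ : ℂ) + y * I‖ := by simpa using abs_im_le_norm ((σ : ℂ) + y * I)
  have hone : 1 ≤ σ⁻¹ * ‖(σ : ℂ) + y * I‖ := by
    rw [inv_mul_eq_div]
    exact (one_le_div₀ hσ).2 hre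
  linarith

theorem add_ofReal_mul_I_ne_zero {σ : ℝ} (hσ : σ ≠ 0) (y : ℝ) : (σ : ℂ) + y * I ≠ 0 := fun h ↦
  hσ (by simpa using congrArg re h)

theorem integrable_norm_add_mul_I_rpow {σ r : ℝ} (hσ : 0 < σ) (hr : r < -1) :
    Integrable fun y : ℝ ↦ ‖(σ : ℂ) + y * I‖ ^ r := by
  have hmaj : Integrable fun y : ℝ ↦ (1 + |y|) ^ r := by
    simpa using integrable_one_add_norm (E := ℝ) (μ := volume) (r := -r)
      (by simpa using by linarith)
  refine (hmaj.const_mul ((1 + σ⁻¹)⁻¹ ^ r)).mono' ?_ (.of_forall fun y ↦ ?_)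
  · exact (Continuous.rpow_const (by fun_prop) fun y ↦
      .inl (norm_ne_zero_iff.2 (add_ofReal_mul_I_ne_zero hσ.ne' y))).aestronglyMeasurable
  · rw [Real.norm_of_nonneg (by positivity), ← Real.mul_rpow (by positivity) (by positivity)]
    refine Real.rpow_le_rpow_of_nonpos (by positivity) ?_ (by linarith)
    rw [inv_mul_le_iff₀ (by positivity)]
    exact one_add_abs_le_norm_add_mul_I hσ y

/-- The kernel `u ↦ (1 - u)⁺` of the Riesz means of order one, whose Mellin transform is
`s ↦ 1 / (s * (s + 1))`. -/
noncomputable def rieszKernel (u : ℝ) : ℂ := (max (1 - u) 0 : ℝ)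

theorem hasMellin_rieszKernel {s : ℂ} (hs : 0 < s.re) :
    HasMellin rieszKernel s (1 / (s * (s + 1))) := by
  have hne : s ≠ 0 := ne_zero_of_re_pos hs
  have hne' : s + 1 ≠ 0 := ne_zero_of_re_pos (by simpa using by linarith)
  have hone := hasMellin_one_Ioc hs
  have hid := hasMellin_cpow_Ioc 1 (s := s) (by simpa using by linarith)
  have hsub := hasMellin_sub hone.1 hid.1
  have hEq : Set.EqOn (fun t : ℝ ↦ (t : ℂ) ^ (s - 1) •
        ((Set.Ioc (0 : ℝ) 1).indicator (fun _ ↦ (1 : ℂ)) t -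
          (Set.Ioc (0 : ℝ) 1).indicator (fun t : ℝ ↦ (t : ℂ) ^ (1 : ℂ)) t))
      (fun t ↦ (t : ℂ) ^ (s - 1) • rieszKernel t) (Set.Ioi 0) := by
    intro t ht
    rcases le_or_gt t 1 with h | h
    · have hmem : t ∈ Set.Ioc (0 : ℝ) 1 := ⟨ht, h⟩
      simp [rieszKernel, hmem, h]
    · have hmem : t ∉ Set.Ioc (0 : ℝ) 1 := fun h' ↦ h.not_ge h'.2
      simp [rieszKernel, hmem, h.le]
  refine ⟨(integrableOn_congr_fun hEq measurableSet_Ioi).1 hsub.1, ?_⟩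
  calc mellin rieszKernel s = 1 / s - 1 / (s + 1) := by
        rw [← hone.2, ← hid.2, ← hsub.2]
        exact (setIntegral_congr_fun measurableSet_Ioi hEq).symm
    _ = 1 / (s * (s + 1)) := by
        field_simp
        ring

theorem norm_one_div_mul_add_one_le {s : ℂ} (hs : 0 < s.re) :
    ‖1 / (s * (s + 1))‖ ≤ ‖s‖ ^ (-2 : ℝ) := by
  have hpos : 0 < ‖s‖ := norm_pos_iff.2 (ne_zero_of_re_pos hs)
  have hle : ‖s‖ ≤ ‖s + 1‖ := by simpa using norm_le_norm_add_ofReal hs.le zero_le_one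
  rw [norm_div, norm_one, norm_mul, Real.rpow_neg hpos.le, Real.rpow_two, sq, one_div]
  gcongr

variable {σ : ℝ}

theorem continuous_one_div_mul_add_one (hσ : 0 < σ) :
    Continuous fun y : ℝ ↦ 1 / (((σ : ℂ) + y * I) * (σ + y * I + 1)) := by
  have hne (y : ℝ) : ((σ : ℂ) + y * I) * (σ + y * I + 1) ≠ 0 :=
    mul_ne_zero (add_ofReal_mul_I_ne_zero hσ.ne' y)
      (ne_zero_of_re_pos (by simpa using by linarith))
  fun_prop (disch := exact hne _)

theorem integrable_one_div_mul_add_one (hσ : 0 < σ) :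
    Integrable fun y : ℝ ↦ 1 / (((σ : ℂ) + y * I) * (σ + y * I + 1)) :=
  (integrable_norm_add_mul_I_rpow hσ (by norm_num)).mono'
    (continuous_one_div_mul_add_one hσ).aestronglyMeasurable
    (.of_forall fun y ↦ norm_one_div_mul_add_one_le (by simpa using hσ))

theorem rieszKernel_eq_integral (hσ : 0 < σ) {u : ℝ} (hu : 0 < u) :
    rieszKernel u = (1 / (2 * Real.pi)) •
      ∫ y : ℝ, (u : ℂ) ^ (-(σ + y * I)) * (1 / ((σ + y * I) * (σ + y * I + 1))) := by
  have hmellin (y : ℝ) :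
      mellin rieszKernel (σ + y * I) = 1 / ((σ + y * I) * (σ + y * I + 1)) :=
    (hasMellin_rieszKernel (by simpa using hσ)).2
  have hcont : Continuous rieszKernel := by
    unfold rieszKernel
    fun_prop
  have hinv := mellinInv_mellin_eq σ rieszKernel hu
    (hasMellin_rieszKernel (s := σ) (by simpa using hσ)).1
    (by simpa only [VerticalIntegrable, hmellin] using integrable_one_div_mul_add_one hσ)
    hcont.continuousAt
  simpa only [mellinInv, hmellin, smul_eq_mul] using hinv.symm

theorem natCast_div_cpow_neg {x : ℝ} (hx : 0 < x) (n : ℕ) (s : ℂ) :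
    ((n / x : ℝ) : ℂ) ^ (-s) = (x : ℂ) ^ s / (n : ℂ) ^ s := by
  have harg : ((x : ℂ)).arg ≠ Real.pi := by
    rw [arg_ofReal_of_nonneg hx.le]
    exact Real.pi_pos.ne
  rw [div_eq_mul_inv, ofReal_mul, mul_cpow_ofReal_nonneg n.cast_nonneg (by positivity), ofReal_inv,
    cpow_neg, cpow_neg, inv_cpow _ _ harg, inv_inv, ofReal_natCast]
  ring

theorem continuous_term_add_mul_I (f : ℕ → ℂ) (n : ℕ) :
    Continuous fun y : ℝ ↦ LSeries.term f (σ + y * I) n := by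
  rcases eq_or_ne n 0 with rfl | hn
  · simpa using continuous_const
  · have hn' : (n : ℂ) ≠ 0 := by exact_mod_cast hn
    simp only [LSeries.term_of_ne_zero hn]
    have hne (y : ℝ) : (n : ℂ) ^ ((σ : ℂ) + y * I) ≠ 0 := by simp [cpow_eq_zero_iff, hn]
    exact continuous_const.div (.const_cpow (by fun_prop) (.inl hn')) hne

theorem hasSum_integral_term_mul {f : ℕ → ℂ} {x : ℝ} (hσ : 0 < σ) (hx : 0 < x)
    (hf : LSeriesSummable f σ) :
    HasSum
      (fun n ↦ ∫ y : ℝ, (x : ℂ) ^ (σ + y * I) * LSeries.term f (σ + y * I) n *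
        (1 / ((σ + y * I) * (σ + y * I + 1))))
      (∫ y : ℝ, (x : ℂ) ^ (σ + y * I) * LSeries f (σ + y * I) *
        (1 / ((σ + y * I) * (σ + y * I + 1)))) := by
  set F : ℕ → ℝ → ℂ := fun n y ↦ (x : ℂ) ^ (σ + y * I) * LSeries.term f (σ + y * I) n *
    (1 / ((σ + y * I) * (σ + y * I + 1)))
  have hnorm (n : ℕ) (y : ℝ) : ‖F n y‖ =
      x ^ σ * ‖LSeries.term f σ n‖ * ‖1 / (((σ : ℂ) + y * I) * (σ + y * I + 1))‖ := by
    simp only [F, norm_mul, norm_cpow_eq_rpow_re_of_pos hx, re_add_ofReal_mul_I,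
      LSeries.norm_term_eq, ofReal_re]
  have hcont (n : ℕ) : Continuous (F n) :=
    ((Continuous.const_cpow (by fun_prop) (.inl (by exact_mod_cast hx.ne'))).mul
      (continuous_term_add_mul_I f n)).mul (continuous_one_div_mul_add_one hσ)
  have hint (n : ℕ) : Integrable (F n) :=
    ((integrable_one_div_mul_add_one hσ).norm.const_mul _).mono' (hcont n).aestronglyMeasurable
      (.of_forall fun y ↦ (hnorm n y).le)
  have hsum : Summable fun n ↦ ∫ y, ‖F n y‖ := by
    simp only [hnorm, integral_const_mul]
    exact (hf.norm.mul_left _).mul_right _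
  convert! hasSum_integral_of_summable_integral_norm hint hsum using 3 with y
  simp only [F]
  rw [tsum_mul_right, tsum_mul_left, LSeries]

theorem hasSum_mul_rieszKernel {f : ℕ → ℂ} {x : ℝ} (hσ : 0 < σ) (hx : 0 < x)
    (hf : LSeriesSummable f σ) (hf0 : f 0 = 0) :
    HasSum (fun n : ℕ ↦ f n * rieszKernel (n / x))
      ((1 / (2 * Real.pi)) • ∫ y : ℝ, (x : ℂ) ^ (σ + y * I) * LSeries f (σ + y * I) *
        (1 / ((σ + y * I) * (σ + y * I + 1)))) := by
  convert! (hasSum_integral_term_mul hσ hx hf).const_smul (1 / (2 * Real.pi)) using 2 with n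
  rcases eq_or_ne n 0 with rfl | hn
  · simp [hf0]
  · have hpos : 0 < (n : ℝ) / x := by positivity
    rw [rieszKernel_eq_integral hσ hpos, mul_smul_comm, ← integral_const_mul]
    congr 2 with y
    rw [LSeries.term_of_ne_zero hn, natCast_div_cpow_neg hx]
    ring

theorem mul_tsum_mul_rieszKernel {f : ℕ → ℂ} {x : ℝ} (hx : 0 < x) (hf0 : f 0 = 0) :
    x * ∑' n : ℕ, f n * rieszKernel (n / x) = ∑ n ∈ Finset.Ioc 0 ⌊x⌋₊, f n * (x - n) := by
  have hx' : (x : ℂ) ≠ 0 := by exact_mod_cast hx.ne'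
  rw [tsum_eq_sum (s := Finset.Ioc 0 ⌊x⌋₊) fun n hn ↦ ?_, Finset.mul_sum]
  · refine Finset.sum_congr rfl fun n hn ↦ ?_
    have hle : (n : ℝ) / x ≤ 1 :=
      (div_le_one hx).2 ((Nat.le_floor_iff hx.le).1 (Finset.mem_Ioc.1 hn).2)
    rw [rieszKernel, max_eq_left (by linarith)]
    push_cast
    field_simp
  · rcases n.eq_zero_or_pos with rfl | hpos
    · simp [hf0]
    · have hlt : x < n := by simpa [hpos, Nat.floor_lt hx.le] using hn
      have hge : 1 ≤ (n : ℝ) / x := (one_le_div hx).2 hlt.le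
      rw [rieszKernel, max_eq_right (by linarith)]
      simp

/-- Weighting by `x - n` makes the contour integral absolutely convergent as soon as the Dirichlet
series grows more slowly than `‖s‖`. -/
theorem norm_sum_mul_sub_le {f : ℕ → ℂ} {x η C : ℝ} (hσ : 1 ≤ σ) (hx : 0 < x) (hη : η < 1)
    (hf : LSeriesSummable f σ) (hf0 : f 0 = 0)
    (hC : ∀ y : ℝ, ‖LSeries f (σ + y * I)‖ ≤ C * ‖(σ : ℂ) + y * I‖ ^ η) :
    ‖∑ n ∈ Finset.Ioc 0 ⌊x⌋₊, f n * (x - n)‖ ≤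
      C * (∫ y : ℝ, ‖(1 : ℂ) + y * I‖ ^ (η - 2)) * x ^ (σ + 1) := by
  have hσ0 : 0 < σ := by linarith
  have hC0 : 0 ≤ C := nonneg_of_mul_nonneg_left ((norm_nonneg _).trans (hC 0))
    (Real.rpow_pos_of_pos (norm_pos_iff.2 (add_ofReal_mul_I_ne_zero hσ0.ne' 0)) _)
  have hint : Integrable fun y : ℝ ↦ ‖(1 : ℂ) + y * I‖ ^ (η - 2) := by
    simpa using integrable_norm_add_mul_I_rpow one_pos (by linarith : η - 2 < -1)
  have hintegral : ‖∫ y : ℝ, (x : ℂ) ^ (σ + y * I) * LSeries f (σ + y * I) *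
      (1 / ((σ + y * I) * (σ + y * I + 1)))‖ ≤
      ∫ y : ℝ, x ^ σ * C * ‖(1 : ℂ) + y * I‖ ^ (η - 2) := by
    refine norm_integral_le_of_norm_le (hint.const_mul _) (.of_forall fun y ↦ ?_)
    have hpos (τ : ℝ) (hτ : 0 < τ) : 0 < ‖(τ : ℂ) + y * I‖ :=
      norm_pos_iff.2 (add_ofReal_mul_I_ne_zero hτ.ne' y)
    calc _ ≤ x ^ σ * (C * ‖(σ : ℂ) + y * I‖ ^ η) * ‖(σ : ℂ) + y * I‖ ^ (-2 : ℝ) := by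
          rw [norm_mul, norm_mul, norm_cpow_eq_rpow_re_of_pos hx, re_add_ofReal_mul_I]
          gcongr
          · exact hC y
          · exact norm_one_div_mul_add_one_le (by simpa using hσ0)
      _ = x ^ σ * C * ‖(σ : ℂ) + y * I‖ ^ (η - 2) := by
          rw [sub_eq_add_neg, Real.rpow_add (hpos σ hσ0)]
          ring
      _ ≤ _ := by
          refine mul_le_mul_of_nonneg_left ?_ (by positivity)
          exact Real.rpow_le_rpow_of_nonpos (by simpa using hpos 1 one_pos)
            (norm_one_add_mul_I_le hσ y) (by linarith)
  rw [integral_const_mul] at hintegral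
  have hpi : ‖1 / (2 * Real.pi)‖ ≤ 1 := by
    rw [Real.norm_of_nonneg (by positivity), div_le_one (by positivity)]
    linarith [Real.pi_gt_three]
  rw [← mul_tsum_mul_rieszKernel hx hf0, (hasSum_mul_rieszKernel hσ0 hx hf hf0).tsum_eq, norm_mul,
    norm_smul, norm_real, Real.norm_of_nonneg hx.le, Real.rpow_add_one hx.ne']
  calc _ ≤ x * (1 * (x ^ σ * C * ∫ y : ℝ, ‖(1 : ℂ) + y * I‖ ^ (η - 2))) := by gcongr
    _ = _ := by ring

end RieszPerron

section LogWeightedDefect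

open scoped ArithmeticFunction.vonMangoldt

theorem LSeriesSummable_vonMangoldt_sub_one {s : ℂ} (hs : 1 < s.re) :
    LSeriesSummable ((fun n ↦ (Λ n : ℂ)) - 1) s :=
  (ArithmeticFunction.LSeriesSummable_vonMangoldt hs).sub (LSeriesSummable_one_iff.2 hs)

theorem LSeries_vonMangoldt_sub_one {s : ℂ} (hs : 1 < s.re) :
    LSeries ((fun n ↦ (Λ n : ℂ)) - 1) s = zetaLogDerivDefect s := by
  have hne : s ≠ 1 := by
    rintro rfl
    simp at hs
  rw [LSeries_sub (ArithmeticFunction.LSeriesSummable_vonMangoldt hs)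
      (LSeriesSummable_one_iff.2 hs),
    ArithmeticFunction.LSeries_vonMangoldt_eq_deriv_riemannZeta_div hs,
    LSeries_one_eq_riemannZeta hs,
    neg_deriv_riemannZeta_div_sub_riemannZeta hne (riemannZeta₁_ne_zero_of_one_le_re hs.le)]

theorem abscissaOfAbsConv_vonMangoldt_sub_one_le :
    LSeries.abscissaOfAbsConv ((fun n ↦ (Λ n : ℂ)) - 1) ≤ (1 : ℝ) :=
  LSeries.abscissaOfAbsConv_le_of_forall_lt_LSeriesSummable fun _ hy ↦
    LSeriesSummable_vonMangoldt_sub_one (by simpa using hy)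

/-- The coefficients `(Λ n - 1) (log n) ^ k` of the `k`-th derivative of `-ζ'/ζ - ζ`, up to the sign
`(-1) ^ k`. -/
noncomputable def logWeightedDefect (k n : ℕ) : ℝ := (Λ n - 1) * Real.log n ^ k

variable {k : ℕ}

theorem logWeightedDefect_zero (hk : k ≠ 0) : logWeightedDefect k 0 = 0 := by
  simp [logWeightedDefect, hk]

theorem logWeightedDefect_one (hk : k ≠ 0) : logWeightedDefect k 1 = 0 := by
  simp [logWeightedDefect, hk]

theorem neg_log_pow_le_logWeightedDefect (k n : ℕ) : -Real.log n ^ k ≤ logWeightedDefect k n := by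
  have hmul : 0 ≤ Λ n * Real.log n ^ k :=
    mul_nonneg ArithmeticFunction.vonMangoldt_nonneg (pow_nonneg (Real.log_natCast_nonneg n) k)
  rw [logWeightedDefect]
  linarith

theorem logMul_iterate_vonMangoldt_sub_one (k : ℕ) :
    LSeries.logMul^[k] ((fun n ↦ (Λ n : ℂ)) - 1) = fun n ↦ (logWeightedDefect k n : ℂ) := by
  induction k with
  | zero => ext n; simp [logWeightedDefect]
  | succ k ih =>
    ext n
    rw [Function.iterate_succ_apply', ih, LSeries.logMul, logWeightedDefect, logWeightedDefect,
      ← natCast_log]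
    push_cast
    ring

theorem LSeriesSummable_logWeightedDefect (k : ℕ) {s : ℂ} (hs : 1 < s.re) :
    LSeriesSummable (fun n ↦ (logWeightedDefect k n : ℂ)) s := by
  rw [← logMul_iterate_vonMangoldt_sub_one]
  apply LSeriesSummable_of_abscissaOfAbsConv_lt_re
  rw [LSeries.absicssaOfAbsConv_logPowMul]
  exact abscissaOfAbsConv_vonMangoldt_sub_one_le.trans_lt (by exact_mod_cast hs)

theorem norm_LSeries_logWeightedDefect (k : ℕ) {s : ℂ} (hs : 1 < s.re) :
    ‖LSeries (fun n ↦ (logWeightedDefect k n : ℂ)) s‖ = ‖iteratedDeriv k zetaLogDerivDefect s‖ := by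
  have hEq : LSeries ((fun n ↦ (Λ n : ℂ)) - 1) =ᶠ[𝓝 s] zetaLogDerivDefect := by
    filter_upwards [(isOpen_lt continuous_const continuous_re).mem_nhds hs] with z hz
      using LSeries_vonMangoldt_sub_one hz
  rw [← hEq.iteratedDeriv_eq, LSeries_iteratedDeriv k
    (abscissaOfAbsConv_vonMangoldt_sub_one_le.trans_lt (by exact_mod_cast hs)),
    logMul_iterate_vonMangoldt_sub_one, norm_mul, norm_pow, norm_neg, norm_one, one_pow, one_mul]

/-- The summatory function `∑ 1 ≤ n ≤ x, a n`; the term `a 0` is left out. -/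
noncomputable def summatory (a : ℕ → ℝ) (x : ℝ) : ℝ := ∑ n ∈ Finset.Ioc 0 ⌊x⌋₊, a n

/-- The smoothed summatory function `∑ 1 ≤ n ≤ x, a n * (x - n)`, which is the integral of
`summatory a` over `[0, x]`. -/
noncomputable def rieszSum (a : ℕ → ℝ) (x : ℝ) : ℝ := ∑ n ∈ Finset.Ioc 0 ⌊x⌋₊, a n * (x - n)

/-- The factor `x ^ (σ + 1)` in Perron's bound is `e * x ^ 2` on the line `σ = 1 + 1 / log x`, which
tends to the boundary of the half-plane of convergence. -/
theorem rieszSum_logWeightedDefect_isBigO (hk : k ≠ 0) :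
    rieszSum (logWeightedDefect k) =O[atTop] fun x ↦ x ^ 2 := by
  obtain ⟨C, -, hC⟩ := exists_norm_iteratedDeriv_zetaLogDerivDefect_le k (η := 1 / 2) (by norm_num)
  refine .of_bound (C * (∫ y : ℝ, ‖(1 : ℂ) + y * I‖ ^ (1 / 2 - 2 : ℝ)) * Real.exp 1) ?_
  filter_upwards [Real.tendsto_log_atTop.eventually_ge_atTop 2, eventually_gt_atTop 0]
    with x hlog hx
  set σ := 1 + 1 / Real.log x with hσ
  have hσ1 : 1 < σ := by
    rw [hσ]
    linarith [one_div_pos.2 (by linarith : 0 < Real.log x)]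
  have hσ2 : σ ≤ 3 / 2 := by
    rw [hσ]
    linarith [one_div_le_one_div_of_le zero_lt_two hlog]
  have hpow : x ^ (σ + 1) = Real.exp 1 * x ^ 2 := by
    rw [Real.rpow_add_one hx.ne', hσ, Real.rpow_add hx, Real.rpow_one, Real.rpow_def_of_pos hx,
      mul_one_div_cancel (by linarith)]
    ring
  have hperron := norm_sum_mul_sub_le hσ1.le hx (η := 1 / 2) (C := C) (by norm_num)
    (LSeriesSummable_logWeightedDefect k (s := σ) (by simpa using hσ1))
    (by simp [logWeightedDefect_zero hk]) fun y ↦ by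
      rw [norm_LSeries_logWeightedDefect k (by simpa using hσ1)]
      exact hC _ (by simpa using hσ1.le) (by simpa using hσ2)
  have hcast : ‖rieszSum (logWeightedDefect k) x‖ =
      ‖∑ n ∈ Finset.Ioc 0 ⌊x⌋₊, (logWeightedDefect k n : ℂ) * (x - n)‖ := by
    rw [← norm_real, rieszSum]
    push_cast
    rfl
  rw [hcast, Real.norm_of_nonneg (by positivity), mul_assoc, ← hpow]
  exact hperron

end LogWeightedDefect

section Unsmoothing

variable {a : ℕ → ℝ} {x y B : ℝ}

theorem rieszSum_sub_rieszSum (hxy : x ≤ y) : rieszSum a y - rieszSum a x =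
    (y - x) * summatory a x + ∑ n ∈ Finset.Ioc ⌊x⌋₊ ⌊y⌋₊, a n * (y - n) := by
  have hsplit := Finset.sum_Ioc_consecutive (fun n : ℕ ↦ a n * (y - n)) (Nat.zero_le _)
    (Nat.floor_mono hxy)
  have hconst : ∑ n ∈ Finset.Ioc 0 ⌊x⌋₊, a n * (y - n) =
      rieszSum a x + (y - x) * summatory a x := by
    rw [rieszSum, summatory, Finset.mul_sum, ← Finset.sum_add_distrib]
    exact Finset.sum_congr rfl fun n _ ↦ by ring
  rw [rieszSum, ← hsplit, hconst]
  ring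

theorem rieszSum_sub_rieszSum' (hxy : x ≤ y) : rieszSum a y - rieszSum a x =
    (y - x) * summatory a y - ∑ n ∈ Finset.Ioc ⌊x⌋₊ ⌊y⌋₊, a n * (n - x) := by
  have hsummatory : summatory a x + ∑ n ∈ Finset.Ioc ⌊x⌋₊ ⌊y⌋₊, a n = summatory a y :=
    Finset.sum_Ioc_consecutive a (Nat.zero_le _) (Nat.floor_mono hxy)
  have hsum : ∑ n ∈ Finset.Ioc ⌊x⌋₊ ⌊y⌋₊, a n * (y - n) +
      ∑ n ∈ Finset.Ioc ⌊x⌋₊ ⌊y⌋₊, a n * (n - x) = (y - x) * ∑ n ∈ Finset.Ioc ⌊x⌋₊ ⌊y⌋₊, a n := by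
    rw [← Finset.sum_add_distrib, Finset.mul_sum]
    exact Finset.sum_congr rfl fun n _ ↦ by ring
  rw [rieszSum_sub_rieszSum hxy, ← hsummatory]
  linarith

theorem neg_mul_le_sum_mul_of_mem_Icc {w : ℕ → ℝ} (hx : 0 ≤ x) (hxy : x ≤ y) (hB : 0 ≤ B)
    (hw : ∀ n : ℕ, x < n → n ≤ y → w n ∈ Set.Icc 0 (y - x))
    (ha : ∀ n : ℕ, n ≤ y → -B ≤ a n) :
    -((y - x + 1) * (B * (y - x))) ≤ ∑ n ∈ Finset.Ioc ⌊x⌋₊ ⌊y⌋₊, a n * w n := by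
  have hcard : ((Finset.Ioc ⌊x⌋₊ ⌊y⌋₊).card : ℝ) ≤ y - x + 1 := by
    rw [Nat.card_Ioc, Nat.cast_sub (Nat.floor_mono hxy)]
    linarith [Nat.floor_le (hx.trans hxy), Nat.lt_floor_add_one x]
  calc -((y - x + 1) * (B * (y - x))) ≤ (Finset.Ioc ⌊x⌋₊ ⌊y⌋₊).card * -(B * (y - x)) := by
        rw [mul_neg, neg_le_neg_iff]
        gcongr
    _ ≤ ∑ n ∈ Finset.Ioc ⌊x⌋₊ ⌊y⌋₊, a n * w n := by
        rw [← nsmul_eq_mul]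
        refine Finset.card_nsmul_le_sum _ _ _ fun n hn ↦ ?_
        obtain ⟨hxn, hny⟩ := Finset.mem_Ioc.1 hn
        have hny' : (n : ℝ) ≤ y := (Nat.le_floor_iff (hx.trans hxy)).1 hny
        obtain ⟨hw0, hw1⟩ := hw n ((Nat.floor_lt hx).1 hxn) hny'
        calc -(B * (y - x)) ≤ -(B * w n) := by gcongr
          _ = -B * w n := by ring
          _ ≤ a n * w n := by gcongr; exact ha n hny'

theorem sub_mul_summatory_le (hx : 0 ≤ x) (hxy : x ≤ y) (hB : 0 ≤ B)
    (ha : ∀ n : ℕ, n ≤ y → -B ≤ a n) :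
    (y - x) * summatory a x ≤ rieszSum a y - rieszSum a x + (y - x + 1) * (B * (y - x)) := by
  have hwindow := neg_mul_le_sum_mul_of_mem_Icc (w := fun n ↦ y - n) hx hxy hB
    (fun n hxn hny ↦ ⟨by linarith, by linarith⟩) ha
  linarith [rieszSum_sub_rieszSum (a := a) hxy]

theorem le_sub_mul_summatory (hx : 0 ≤ x) (hxy : x ≤ y) (hB : 0 ≤ B)
    (ha : ∀ n : ℕ, n ≤ y → -B ≤ a n) :
    rieszSum a y - rieszSum a x - (y - x + 1) * (B * (y - x)) ≤ (y - x) * summatory a y := by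
  have hwindow := neg_mul_le_sum_mul_of_mem_Icc (w := fun n ↦ n - x) hx hxy hB
    (fun n hxn hny ↦ ⟨by linarith, by linarith⟩) ha
  linarith [rieszSum_sub_rieszSum' (a := a) hxy]

theorem abs_summatory_le {h C : ℝ} (hh : 0 < h) (hhx : h ≤ x) (hB : 0 ≤ B)
    (ha : ∀ n : ℕ, n ≤ x + h → -B ≤ a n)
    (hC : ∀ y ∈ Set.Icc (x - h) (x + h), |rieszSum a y| ≤ C) :
    |summatory a x| ≤ 2 * C / h + (h + 1) * B := by
  have hupper :=
    sub_mul_summatory_le (a := a) (x := x) (y := x + h) (by linarith) (by linarith) hB ha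
  have hlower := le_sub_mul_summatory (a := a) (x := x - h) (y := x) (by linarith) (by linarith) hB
    fun n hn ↦ ha n (by linarith)
  have hcenter := abs_le.1 (hC x ⟨by linarith, by linarith⟩)
  have hright := abs_le.1 (hC (x + h) ⟨by linarith, le_rfl⟩)
  have hleft := abs_le.1 (hC (x - h) ⟨le_rfl, by linarith⟩)
  rw [add_sub_cancel_left] at hupper
  rw [sub_sub_cancel] at hlower
  have hmul : h * |summatory a x| ≤ 2 * C + (h + 1) * (B * h) := by
    rw [← abs_of_pos hh, ← abs_mul, abs_of_pos hh, abs_le]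
    constructor <;> linarith
  rw [div_add' _ _ _ hh.ne', le_div_iff₀ hh]
  linarith

theorem eventually_log_pow_le_mul (A : ℕ) {c : ℝ} (hc : 0 < c) :
    ∀ᶠ x in atTop, Real.log x ^ A ≤ c * x := by
  filter_upwards [(Real.isLittleO_pow_log_id_atTop (n := A)).bound hc, eventually_ge_atTop 0]
    with x hlog hx
  exact (le_abs_self _).trans (by simpa [abs_of_nonneg hx] using hlog)

theorem neg_log_pow_le_of_natCast_le {m n : ℕ} (ha : ∀ n : ℕ, -Real.log n ^ m ≤ a n) (hx : 1 ≤ x)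
    (hn : n ≤ x) : -Real.log x ^ m ≤ a n := by
  refine le_trans (neg_le_neg (pow_le_pow_left₀ (Real.log_natCast_nonneg n) ?_ _)) (ha n)
  rcases n.eq_zero_or_pos with rfl | hpos
  · simpa using Real.log_nonneg hx
  · exact Real.log_le_log (by exact_mod_cast hpos) hn

/-- The window `h = x / (2 (log x) ^ A)` balances the two error terms of `abs_summatory_le`. -/
theorem summatory_isBigO_of_rieszSum_isBigO {A : ℕ} (ha : ∀ n : ℕ, -Real.log n ^ (2 * A) ≤ a n)
    (hT : rieszSum a =O[atTop] fun x ↦ x ^ 2) :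
    summatory a =O[atTop] fun x ↦ x * Real.log x ^ A := by
  obtain ⟨C, hC, hT⟩ := hT.exists_pos
  obtain ⟨X, hX⟩ := eventually_atTop.1 hT.bound
  refine .of_bound (16 * C + 4 ^ A) ?_
  filter_upwards [eventually_ge_atTop (2 * X), eventually_ge_atTop 2,
    eventually_log_pow_le_mul A (inv_pos.2 two_pos), Real.tendsto_log_atTop.eventually_ge_atTop 1]
    with x hxX hx2 hlogA hlog
  set q := Real.log x ^ A with hq
  have hq1 : 1 ≤ q := one_le_pow₀ hlog
  set h := x / (2 * q) with hh
  have hh1 : 1 ≤ h := (one_le_div (by positivity)).2 (by linarith)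
  have hhx : h ≤ x / 2 := by
    rw [hh]
    gcongr
    linarith
  have hlog2 : Real.log (2 * x) ≤ 2 * Real.log x := by
    rw [Real.log_mul two_ne_zero (by linarith)]
    linarith [Real.log_le_log two_pos hx2]
  have hcoeff (n : ℕ) (hn : n ≤ x + h) : -Real.log (2 * x) ^ (2 * A) ≤ a n :=
    neg_log_pow_le_of_natCast_le ha (by linarith) (by linarith)
  have hriesz : ∀ y ∈ Set.Icc (x - h) (x + h), |rieszSum a y| ≤ C * (2 * x) ^ 2 := by
    intro y hy
    have hbound := hX y (by linarith [hy.1])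
    rw [Real.norm_eq_abs, Real.norm_of_nonneg (by positivity)] at hbound
    refine hbound.trans ?_
    gcongr <;> linarith [hy.1, hy.2]
  have hlog2x : 0 ≤ Real.log (2 * x) := Real.log_nonneg (by linarith)
  rw [Real.norm_eq_abs, Real.norm_of_nonneg (by positivity)]
  calc |summatory a x|
      ≤ 2 * (C * (2 * x) ^ 2) / h + (h + 1) * Real.log (2 * x) ^ (2 * A) :=
        abs_summatory_le (by linarith) (by linarith) (by positivity) hcoeff hriesz
    _ ≤ 2 * (C * (2 * x) ^ 2) / h + (2 * h) * (2 * Real.log x) ^ (2 * A) := by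
        gcongr
        linarith
    _ = (16 * C + 4 ^ A) * (x * q) := by
        rw [mul_pow 2 (Real.log x), pow_mul 2, pow_mul' (Real.log x), ← hq, hh]
        field_simp
        ring

end Unsmoothing

section LogIntegrals

variable {m n : ℕ} {t b c : ℝ}

theorem continuousOn_inv_log_pow (m : ℕ) :
    ContinuousOn (fun t ↦ (Real.log t ^ m)⁻¹) (Set.Ioi 1) := by
  intro t ht
  have hlog : Real.log t ^ m ≠ 0 := pow_ne_zero m (Real.log_pos ht).ne'
  have ht0 : t ≠ 0 := (one_pos.trans ht).ne'
  exact ContinuousAt.continuousWithinAt (by fun_prop)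

theorem hasDerivAt_inv_log_pow (m : ℕ) (ht : 1 < t) :
    HasDerivAt (fun t ↦ (Real.log t ^ m)⁻¹) (-(m * (Real.log t ^ (m + 1))⁻¹ / t)) t := by
  have hlog := Real.log_pos ht
  refine (((Real.hasDerivAt_log (by linarith)).fun_pow m).fun_inv (by positivity)).congr_deriv ?_
  rcases m with _ | m
  · simp
  · rw [add_tsub_cancel_right]
    field_simp
    ring

theorem hasDerivAt_div_log_pow (m : ℕ) (ht : 1 < t) :
    HasDerivAt (fun t ↦ t / Real.log t ^ m)
      ((Real.log t ^ m)⁻¹ - m * (Real.log t ^ (m + 1))⁻¹) t := by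
  simp only [div_eq_mul_inv]
  refine ((hasDerivAt_id t).fun_mul (hasDerivAt_inv_log_pow m ht)).congr_deriv ?_
  have ht0 : t ≠ 0 := by linarith
  simp only [id, one_mul]
  field_simp
  ring

theorem intervalIntegrable_inv_log_pow (m : ℕ) (hb : 1 < b) (hc : 1 < c) :
    IntervalIntegrable (fun t ↦ (Real.log t ^ m)⁻¹) volume b c :=
  ((continuousOn_inv_log_pow m).mono fun _ ht ↦
    (lt_min hb hc).trans_le ht.1).intervalIntegrable

theorem integral_inv_log_pow_sub (m : ℕ) (hb : 1 < b) (hc : 1 < c) :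
    ∫ t in b..c, ((Real.log t ^ m)⁻¹ - m * (Real.log t ^ (m + 1))⁻¹) =
      c / Real.log c ^ m - b / Real.log b ^ m :=
  intervalIntegral.integral_eq_sub_of_hasDerivAt
    (fun _ ht ↦ hasDerivAt_div_log_pow m ((lt_min hb hc).trans_le ht.1))
    ((intervalIntegrable_inv_log_pow m hb hc).sub
      ((intervalIntegrable_inv_log_pow (m + 1) hb hc).const_mul _))

theorem integral_inv_log_pow_le (hb1 : 1 < b) (hb : Real.exp (2 * m) ≤ b) (hbc : b ≤ c) :
    ∫ t in b..c, (Real.log t ^ m)⁻¹ ≤ 2 * (c / Real.log c ^ m) := by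
  have hc1 : 1 < c := hb1.trans_le hbc
  have hhalf : ∫ t in b..c, 2⁻¹ * (Real.log t ^ m)⁻¹ ≤
      ∫ t in b..c, ((Real.log t ^ m)⁻¹ - m * (Real.log t ^ (m + 1))⁻¹) := by
    refine intervalIntegral.integral_mono_on hbc
      ((intervalIntegrable_inv_log_pow m hb1 hc1).const_mul _)
      ((intervalIntegrable_inv_log_pow m hb1 hc1).sub
        ((intervalIntegrable_inv_log_pow (m + 1) hb1 hc1).const_mul _)) fun t ht ↦ ?_
    have ht0 : 0 < t := by linarith [ht.1]
    have hlogpos : 0 < Real.log t := Real.log_pos (by linarith [ht.1])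
    have hlog : 2 * m ≤ Real.log t := (Real.le_log_iff_exp_le ht0).2 (hb.trans ht.1)
    have hle : m * (Real.log t ^ (m + 1))⁻¹ ≤ 2⁻¹ * (Real.log t ^ m)⁻¹ := by
      rw [pow_succ', mul_inv, ← mul_assoc]
      gcongr
      rw [mul_inv_le_iff₀ hlogpos]
      linarith
    linarith
  have hb0 : 0 ≤ b / Real.log b ^ m :=
    div_nonneg (by linarith) (pow_nonneg (Real.log_nonneg hb1.le) m)
  rw [intervalIntegral.integral_const_mul, integral_inv_log_pow_sub m hb1 hc1] at hhalf
  linarith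

theorem div_log_pow_isBigO_div_log_pow (hmn : m ≤ n) :
    (fun x ↦ x / Real.log x ^ n) =O[atTop] fun x ↦ x / Real.log x ^ m := by
  refine .of_bound' ?_
  filter_upwards [Real.tendsto_log_atTop.eventually_ge_atTop 1, eventually_ge_atTop 0]
    with x hlog hx
  rw [Real.norm_of_nonneg (by positivity), Real.norm_of_nonneg (by positivity)]
  gcongr

theorem sqrt_isBigO_div_log_pow (m : ℕ) :
    Real.sqrt =O[atTop] fun x ↦ x / Real.log x ^ m := by
  have hlog : (fun x ↦ Real.log x ^ m) =O[atTop] Real.sqrt := by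
    rw [funext Real.sqrt_eq_rpow]
    simpa only [Real.rpow_natCast] using
      (isLittleO_log_rpow_rpow_atTop m (by norm_num : (0 : ℝ) < 1 / 2)).isBigO
  refine ((isBigO_refl (fun x ↦ √x / Real.log x ^ m) atTop).mul hlog).congr' ?_ ?_
  · filter_upwards [eventually_gt_atTop 1] with x hx
    have := Real.log_pos hx
    field_simp
  · filter_upwards [eventually_ge_atTop 0] with x hx
    rw [div_mul_eq_mul_div, Real.mul_self_sqrt hx]

theorem const_isBigO_div_log_pow (c : ℝ) (m : ℕ) :
    (fun _ ↦ c) =O[atTop] fun x ↦ x / Real.log x ^ m :=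
  ((isLittleO_const_left.2 <| .inr <|
    tendsto_norm_atTop_atTop.comp Real.tendsto_sqrt_atTop).isBigO).trans (sqrt_isBigO_div_log_pow m)

theorem integral_isBigO_div_log_pow {g : ℝ → ℝ}
    (hg : g =O[atTop] fun t ↦ (Real.log t ^ m)⁻¹)
    (hint : ∀ x, 2 ≤ x → IntervalIntegrable g volume 2 x) :
    (fun x ↦ ∫ t in 2..x, g t) =O[atTop] fun x ↦ x / Real.log x ^ m := by
  obtain ⟨C, hC, hbound⟩ := hg.exists_pos
  obtain ⟨X, hX⟩ := eventually_atTop.1 hbound.bound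
  set b := max X (max 2 (Real.exp (2 * m)))
  have hXb : X ≤ b := le_max_left _ _
  have hb2 : 2 ≤ b := (le_max_left _ _).trans (le_max_right _ _)
  have hbexp : Real.exp (2 * m) ≤ b := (le_max_right _ _).trans (le_max_right _ _)
  have htail : (fun x ↦ ∫ t in b..x, g t) =O[atTop] fun x ↦ x / Real.log x ^ m := by
    refine .of_bound (C * 2) ?_
    filter_upwards [eventually_ge_atTop b] with x hx
    have hlog {t : ℝ} (ht : b ≤ t) : 0 ≤ Real.log t := Real.log_nonneg (by linarith)
    calc ‖∫ t in b..x, g t‖ ≤ ∫ t in b..x, C * (Real.log t ^ m)⁻¹ := by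
          refine intervalIntegral.norm_integral_le_of_norm_le hx (.of_forall fun t ht ↦ ?_)
            ((intervalIntegrable_inv_log_pow m (by linarith) (by linarith)).const_mul C)
          have hlog_t := hlog ht.1.le
          rw [← Real.norm_of_nonneg (by positivity : 0 ≤ (Real.log t ^ m)⁻¹)]
          exact hX t (hXb.trans ht.1.le)
      _ ≤ C * (2 * (x / Real.log x ^ m)) := by
          rw [intervalIntegral.integral_const_mul]
          gcongr
          exact integral_inv_log_pow_le (by linarith) hbexp hx
      _ = C * 2 * ‖x / Real.log x ^ m‖ := by
          have hlog_x := hlog hx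
          rw [Real.norm_of_nonneg (div_nonneg (by linarith) (by positivity)), mul_assoc]
  refine ((const_isBigO_div_log_pow (∫ t in 2..b, g t) m).add htail).congr' ?_ .rfl
  filter_upwards [eventually_ge_atTop b] with x hx
  exact intervalIntegral.integral_add_adjacent_intervals (hint b hb2)
    ((hint b hb2).symm.trans (hint x (hb2.trans hx)))

/-- Integration by parts turns the integral into `x / (log x) ^ m`, up to `m` times the integral
with exponent `m + 1`. -/
theorem integral_inv_log_pow_sub_isBigO (m : ℕ) :
    (fun x ↦ (∫ t in 2..x, (Real.log t ^ m)⁻¹) - x / Real.log x ^ m) =O[atTop]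
      fun x ↦ x / Real.log x ^ (m + 1) := by
  have hnext := integral_isBigO_div_log_pow (isBigO_refl (fun t ↦ (Real.log t ^ (m + 1))⁻¹) atTop)
    fun x hx ↦ intervalIntegrable_inv_log_pow (m + 1) one_lt_two (by linarith)
  refine ((hnext.const_mul_left m).sub
    (const_isBigO_div_log_pow (2 / Real.log 2 ^ m) (m + 1))).congr' ?_ .rfl
  filter_upwards [eventually_gt_atTop 1] with x hx
  have hparts := integral_inv_log_pow_sub m one_lt_two hx
  rw [intervalIntegral.integral_sub (intervalIntegrable_inv_log_pow m one_lt_two hx)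
    ((intervalIntegrable_inv_log_pow (m + 1) one_lt_two hx).const_mul _),
    intervalIntegral.integral_const_mul] at hparts
  linarith

end LogIntegrals

section ChebyshevError

variable {A B : ℕ} {a : ℕ → ℝ}

theorem sum_Icc_eq_summatory (ha0 : a 0 = 0) (x : ℝ) :
    ∑ n ∈ Finset.Icc 0 ⌊x⌋₊, a n = summatory a x := by
  rw [Finset.Icc_eq_cons_Ioc (Nat.zero_le _), Finset.sum_cons, ha0, zero_add, summatory]

theorem integrableOn_deriv_inv_log_pow (m : ℕ) (x : ℝ) :
    IntegrableOn (deriv fun t ↦ (Real.log t ^ m)⁻¹) (Set.Icc 2 x) := by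
  have hsub : Set.Icc 2 x ⊆ Set.Ioi 1 := fun t ht ↦ one_lt_two.trans_le ht.1
  refine IntegrableOn.congr_fun (f := fun t ↦ -(m * (Real.log t ^ (m + 1))⁻¹ / t)) ?_
    (fun t ht ↦ (hasDerivAt_inv_log_pow m (hsub ht)).deriv.symm) measurableSet_Icc
  exact ((((continuousOn_inv_log_pow (m + 1)).mono hsub).const_mul _).div continuousOn_id
    fun t ht ↦ (one_pos.trans (hsub ht)).ne').neg.integrableOn_Icc

theorem summatory_inv_log_pow_mul (ha0 : a 0 = 0) (ha1 : a 1 = 0) (m : ℕ) {x : ℝ} (hx : 2 ≤ x) :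
    summatory (fun n ↦ (Real.log n ^ m)⁻¹ * a n) x = (Real.log x ^ m)⁻¹ * summatory a x -
      ∫ t in 2..x, deriv (fun t ↦ (Real.log t ^ m)⁻¹) t * summatory a t := by
  have habel := sum_mul_eq_sub_integral_mul₁ (f := fun t ↦ (Real.log t ^ m)⁻¹) a ha0 ha1 x
    (fun t ht ↦ (hasDerivAt_inv_log_pow m (one_lt_two.trans_le ht.1)).differentiableAt)
    (integrableOn_deriv_inv_log_pow m x)
  rw [intervalIntegral.integral_of_le hx, ← sum_Icc_eq_summatory (by simp [ha0])]
  simpa only [sum_Icc_eq_summatory ha0] using habel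

theorem intervalIntegrable_deriv_inv_log_pow_mul_summatory (ha0 : a 0 = 0) (m : ℕ) {x : ℝ}
    (hx : 2 ≤ x) :
    IntervalIntegrable (fun t ↦ deriv (fun t ↦ (Real.log t ^ m)⁻¹) t * summatory a t)
      volume 2 x := by
  rw [intervalIntegrable_iff_integrableOn_Icc_of_le hx]
  simpa only [sum_Icc_eq_summatory ha0] using
    integrableOn_mul_sum_Icc (m := 0) a zero_le_two (integrableOn_deriv_inv_log_pow m x)

theorem summatory_inv_log_pow_mul_isBigO (ha0 : a 0 = 0) (ha1 : a 1 = 0)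
    (ha : summatory a =O[atTop] fun x ↦ x * Real.log x ^ A) :
    summatory (fun n ↦ (Real.log n ^ (A + B))⁻¹ * a n) =O[atTop] fun x ↦ x / Real.log x ^ B := by
  have hmain : (fun x ↦ (Real.log x ^ (A + B))⁻¹ * summatory a x) =O[atTop]
      fun x ↦ x / Real.log x ^ B := by
    refine ((isBigO_refl (fun x ↦ (Real.log x ^ (A + B))⁻¹) atTop).mul ha).congr' .rfl ?_
    filter_upwards [eventually_gt_atTop 1] with x hx
    have hlog := Real.log_pos hx
    rw [pow_add]
    field_simp
  have hderiv : (fun t ↦ deriv (fun t ↦ (Real.log t ^ (A + B))⁻¹) t * summatory a t) =O[atTop]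
      fun t ↦ (Real.log t ^ (B + 1))⁻¹ := by
    have hcoeff : deriv (fun t ↦ (Real.log t ^ (A + B))⁻¹) =O[atTop]
        fun t ↦ (Real.log t ^ (A + B + 1))⁻¹ / t := by
      refine ((isBigO_refl _ _).const_mul_left (-(A + B : ℕ) : ℝ)).congr' ?_ .rfl
      filter_upwards [eventually_gt_atTop 1] with t ht
      rw [(hasDerivAt_inv_log_pow (A + B) ht).deriv]
      ring
    refine (hcoeff.mul ha).congr' .rfl ?_
    filter_upwards [eventually_gt_atTop 1] with t ht
    have hlog := Real.log_pos ht
    field_simp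
    ring
  have hintegral := (integral_isBigO_div_log_pow hderiv fun x hx ↦
    intervalIntegrable_deriv_inv_log_pow_mul_summatory ha0 (A + B) hx).trans
      (div_log_pow_isBigO_div_log_pow B.le_succ)
  refine (hmain.sub hintegral).congr' ?_ .rfl
  filter_upwards [eventually_ge_atTop 2] with x hx
  exact (summatory_inv_log_pow_mul ha0 ha1 (A + B) hx).symm

theorem summatory_inv_log_pow_mul_logWeightedDefect {k : ℕ} (hk : k ≠ 0) {x : ℝ} (hx : 1 ≤ x) :
    summatory (fun n ↦ (Real.log n ^ k)⁻¹ * logWeightedDefect k n) x =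
      Chebyshev.psi x - ⌊x⌋₊ + 1 := by
  have hterm (n : ℕ) (hn : n ∈ Finset.Ioc 0 ⌊x⌋₊) :
      (Real.log n ^ k)⁻¹ * logWeightedDefect k n =
        ArithmeticFunction.vonMangoldt n - 1 + if n = 1 then 1 else 0 := by
    rcases eq_or_ne n 1 with rfl | hn1
    · simp [logWeightedDefect, hk]
    · have hlog : 0 < Real.log n :=
        Real.log_pos (by exact_mod_cast Nat.lt_of_le_of_ne (Finset.mem_Ioc.1 hn).1 (Ne.symm hn1))
      rw [logWeightedDefect, if_neg hn1]
      field_simp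
      ring
  have hmem : 1 ∈ Finset.Ioc 0 ⌊x⌋₊ := by simpa [Nat.one_le_floor_iff] using hx
  rw [summatory, Finset.sum_congr rfl hterm, Finset.sum_add_distrib, Finset.sum_sub_distrib,
    Finset.sum_ite_eq', if_pos hmem, Chebyshev.psi]
  simp

theorem psi_sub_id_isBigO (hA : A ≠ 0) :
    (fun x ↦ Chebyshev.psi x - x) =O[atTop] fun x ↦ x / Real.log x ^ A := by
  have hk : 2 * A ≠ 0 := by positivity
  have hsum : summatory (logWeightedDefect (2 * A)) =O[atTop] fun x ↦ x * Real.log x ^ A :=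
    summatory_isBigO_of_rieszSum_isBigO (neg_log_pow_le_logWeightedDefect (2 * A))
      (rieszSum_logWeightedDefect_isBigO hk)
  have hpsi : (fun x : ℝ ↦ Chebyshev.psi x - ⌊x⌋₊ + 1) =O[atTop] fun x ↦ x / Real.log x ^ A := by
    refine (summatory_inv_log_pow_mul_isBigO (B := A) (logWeightedDefect_zero hk)
      (logWeightedDefect_one hk) hsum).congr' ?_ .rfl
    filter_upwards [eventually_ge_atTop 1] with x hx
    rw [← two_mul, summatory_inv_log_pow_mul_logWeightedDefect hk hx]
  have hfloor : (fun x : ℝ ↦ (⌊x⌋₊ : ℝ) - x - 1) =O[atTop] fun x ↦ x / Real.log x ^ A := by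
    refine IsBigO.trans (.of_bound' ?_) (const_isBigO_div_log_pow 2 A)
    filter_upwards [eventually_ge_atTop 0] with x hx
    rw [Real.norm_eq_abs, Real.norm_eq_abs, abs_two, abs_le]
    constructor <;> linarith [Nat.floor_le hx, Nat.lt_floor_add_one x]
  exact (hpsi.add hfloor).congr_left fun x ↦ by ring

theorem theta_sub_id_isBigO (hA : A ≠ 0) :
    (fun x ↦ Chebyshev.theta x - x) =O[atTop] fun x ↦ x / Real.log x ^ A :=
  ((psi_sub_id_isBigO hA).sub
    (Chebyshev.isBigO_psi_sub_theta_sqrt.trans (sqrt_isBigO_div_log_pow A))).congr_left fun x ↦ by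
      rw [Pi.sub_apply]
      ring

theorem integral_theta_div_sub_isBigO :
    (fun x ↦ (∫ t in 2..x, Chebyshev.theta t / (t * Real.log t ^ 2)) - x / Real.log x ^ 2)
      =O[atTop] fun x ↦ x / Real.log x ^ 3 := by
  have htheta (x : ℝ) (hx : 2 ≤ x) :
      IntervalIntegrable (fun t ↦ Chebyshev.theta t / (t * Real.log t ^ 2)) volume 2 x :=
    (intervalIntegrable_iff_integrableOn_Icc_of_le hx).2
      (Chebyshev.integrableOn_theta_div_id_mul_log_sq x)
  have hlog (x : ℝ) (hx : 2 ≤ x) : IntervalIntegrable (fun t ↦ (Real.log t ^ 2)⁻¹) volume 2 x :=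
    intervalIntegrable_inv_log_pow 2 one_lt_two (by linarith)
  have hdefect : (fun t ↦ Chebyshev.theta t / (t * Real.log t ^ 2) - (Real.log t ^ 2)⁻¹) =O[atTop]
      fun t ↦ (Real.log t ^ 3)⁻¹ := by
    refine ((theta_sub_id_isBigO one_ne_zero).mul
      (isBigO_refl (fun t ↦ (t * Real.log t ^ 2)⁻¹) atTop)).congr' ?_ ?_ <;>
    · filter_upwards [eventually_gt_atTop 1] with t ht
      have hlog := Real.log_pos ht
      field_simp
  refine ((integral_isBigO_div_log_pow hdefect fun x hx ↦ (htheta x hx).sub (hlog x hx)).add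
    (integral_inv_log_pow_sub_isBigO 2)).congr' ?_ .rfl
  filter_upwards [eventually_ge_atTop 2] with x hx
  rw [intervalIntegral.integral_sub (htheta x hx) (hlog x hx)]
  ring

theorem primeCounting_sub_div_log_isBigO :
    (fun x : ℝ ↦ (Nat.primeCounting ⌊x⌋₊ : ℝ) - (x / Real.log x + x / Real.log x ^ 2)) =O[atTop]
      fun x ↦ x / Real.log x ^ 3 := by
  have htheta : (fun x ↦ (Chebyshev.theta x - x) / Real.log x) =O[atTop]
      fun x ↦ x / Real.log x ^ 3 :=
    ((theta_sub_id_isBigO two_ne_zero).mul (isBigO_refl (fun x ↦ (Real.log x)⁻¹) atTop)).congr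
      (fun x ↦ rfl) fun x ↦ by ring
  refine (htheta.add integral_theta_div_sub_isBigO).congr' ?_ .rfl
  filter_upwards [eventually_ge_atTop 2] with x hx
  rw [Chebyshev.primeCounting_eq_theta_div_log_add_integral hx]
  ring

end ChebyshevError

section PrimesInLongIntervals

variable {ε : ℝ}

/-- The ratio `x / t` for which `(t, x]` is expected to contain at least `t` primes, as a function
of `L = log t`. -/
noncomputable def intervalRatio (ε L : ℝ) : ℝ :=
  L + Real.log L + ε

theorem tendsto_intervalRatio_div_self : Tendsto (fun L ↦ intervalRatio ε L / L) atTop (𝓝 1) := by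
  have hlog : Tendsto (fun L ↦ Real.log L / L) atTop (𝓝 0) :=
    Real.isLittleO_log_id_atTop.tendsto_div_nhds_zero
  have hlim := (hlog.const_add 1).add (tendsto_id.const_div_atTop ε)
  rw [add_zero, add_zero] at hlim
  refine hlim.congr' ?_
  filter_upwards [eventually_ne_atTop 0] with L hL
  simp only [intervalRatio, id]
  field_simp

theorem tendsto_intervalRatio_atTop : Tendsto (intervalRatio ε) atTop atTop :=
  tendsto_atTop_add_const_right _ _ (tendsto_id.atTop_add_atTop Real.tendsto_log_atTop)

theorem tendsto_log_intervalRatio_sub_log :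
    Tendsto (fun L ↦ Real.log (intervalRatio ε L) - Real.log L) atTop (𝓝 0) := by
  have hlim := tendsto_intervalRatio_div_self (ε := ε).log one_ne_zero
  rw [Real.log_one] at hlim
  refine hlim.congr' ?_
  filter_upwards [eventually_ne_atTop 0, tendsto_intervalRatio_atTop.eventually_ne_atTop 0]
    with L hL hM
  exact Real.log_div hM hL

theorem tendsto_div_add_log_intervalRatio :
    Tendsto (fun L ↦ L / (L + Real.log (intervalRatio ε L))) atTop (𝓝 1) := by
  have hlim := ((tendsto_intervalRatio_div_self (ε := ε)).add
    ((tendsto_log_intervalRatio_sub_log (ε := ε)).sub_const ε |>.div_atTop tendsto_id)).inv₀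
      (by norm_num)
  rw [add_zero, inv_one] at hlim
  refine hlim.congr fun L ↦ ?_
  rw [id, ← add_div, inv_div, intervalRatio]
  congr 1
  ring

theorem tendsto_mul_intervalRatio_div_sub_one :
    Tendsto (fun L ↦ L * (intervalRatio ε L / (L + Real.log (intervalRatio ε L)) - 1))
      atTop (𝓝 ε) := by
  have hlim := (tendsto_div_add_log_intervalRatio (ε := ε)).mul
    ((tendsto_log_intervalRatio_sub_log (ε := ε)).const_sub ε)
  rw [sub_zero, one_mul] at hlim
  refine hlim.congr' ?_
  have hpos : Tendsto (fun L ↦ L + Real.log (intervalRatio ε L)) atTop atTop :=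
    tendsto_id.atTop_add_atTop (Real.tendsto_log_atTop.comp tendsto_intervalRatio_atTop)
  filter_upwards [hpos.eventually_ne_atTop 0] with L hL
  rw [div_sub_one hL, mul_div_assoc', div_mul_eq_mul_div]
  congr 2
  rw [intervalRatio]
  ring

theorem tendsto_log_mul_log_mul_primeCounting_div_sub_one :
    Tendsto (fun x : ℝ ↦ Real.log x * (Real.log x * (Nat.primeCounting ⌊x⌋₊ / x) - 1))
      atTop (𝓝 1) := by
  have hO : (fun x : ℝ ↦ Real.log x * (Real.log x * (Nat.primeCounting ⌊x⌋₊ / x) - 1) - 1) =O[atTop]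
      fun x ↦ (Real.log x)⁻¹ := by
    refine (primeCounting_sub_div_log_isBigO.mul
      (isBigO_refl (fun x ↦ Real.log x ^ 2 / x) atTop)).congr' ?_ ?_
    · filter_upwards [eventually_gt_atTop 1] with x hx
      have hlog := Real.log_pos hx
      field_simp
      ring
    · filter_upwards [eventually_gt_atTop 1] with x hx
      have hlog := Real.log_pos hx
      field_simp
  have hzero := hO.trans_tendsto Real.tendsto_log_atTop.inv_tendsto_atTop
  simpa only [sub_add_cancel, zero_add] using hzero.add_const 1

theorem tendsto_log_mul_primeCounting_div :
    Tendsto (fun x : ℝ ↦ Real.log x * (Nat.primeCounting ⌊x⌋₊ / x)) atTop (𝓝 1) := by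
  have hlim := (tendsto_log_mul_log_mul_primeCounting_div_sub_one.div_atTop
    Real.tendsto_log_atTop).add_const 1
  rw [zero_add] at hlim
  refine hlim.congr' ?_
  filter_upwards [Real.tendsto_log_atTop.eventually_ne_atTop 0] with x hx
  rw [mul_div_cancel_left₀ _ hx, sub_add_cancel]

theorem tendsto_log_mul_primeCounting_sub_div_sub_one :
    Tendsto (fun t : ℝ ↦ Real.log t *
      ((Nat.primeCounting ⌊t * intervalRatio ε (Real.log t)⌋₊ - Nat.primeCounting ⌊t⌋₊) / t - 1))
      atTop (𝓝 ε) := by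
  have hlog := Real.tendsto_log_atTop
  have hratio := (tendsto_intervalRatio_atTop (ε := ε)).comp hlog
  have hupper := (tendsto_mul_intervalRatio_div_sub_one (ε := ε)).comp hlog
  have hsecond := (((tendsto_intervalRatio_div_self (ε := ε)).mul
    ((tendsto_div_add_log_intervalRatio (ε := ε)).pow 2)).comp hlog).mul
      (tendsto_log_mul_log_mul_primeCounting_div_sub_one.comp (tendsto_id.atTop_mul_atTop₀ hratio))
  have hlim := (hupper.add hsecond).sub tendsto_log_mul_primeCounting_div
  rw [one_pow, one_mul, one_mul, add_sub_cancel_right] at hlim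
  refine hlim.congr' ?_
  filter_upwards [eventually_gt_atTop 1, hratio.eventually_gt_atTop 1] with t ht hM
  simp only [Function.comp_apply, id] at hM ⊢
  have hL := Real.log_pos ht
  have hlogM := Real.log_pos hM
  rw [Real.log_mul (by positivity) (by positivity)]
  field_simp
  ring

theorem eventually_primeCounting_add_self_le (hε : 0 < ε) : ∀ᶠ k : ℕ in atTop,
    Nat.primeCounting k + k ≤
      Nat.primeCounting ⌊(k * intervalRatio ε (Real.log k) : ℝ)⌋₊ := by
  filter_upwards [tendsto_natCast_atTop_atTop.eventually
    (tendsto_log_mul_primeCounting_sub_div_sub_one.eventually (eventually_gt_nhds hε)),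
    eventually_gt_atTop 1] with k hk hk1
  have hk0 : (0 : ℝ) < k := by positivity
  have hlog : 0 < Real.log k := Real.log_pos (by exact_mod_cast hk1)
  rw [Nat.floor_natCast, mul_pos_iff_of_pos_left hlog, sub_pos, one_lt_div hk0] at hk
  exact_mod_cast (lt_sub_iff_add_lt'.1 hk).le

end PrimesInLongIntervals

section PrimeTuples

variable {k N : ℕ}

theorem le_card_filter_prime_Ioc (hN : Nat.primeCounting k + k ≤ Nat.primeCounting N) :
    k ≤ ((Finset.Ioc k N).filter Nat.Prime).card := by
  have hsub : (Finset.Icc 0 N).filter Nat.Prime ⊆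
      (Finset.Icc 0 k).filter Nat.Prime ∪ (Finset.Ioc k N).filter Nat.Prime := by
    rw [← Finset.filter_union]
    exact Finset.filter_subset_filter _ (by grind)
  have hcard := (Finset.card_le_card hsub).trans (Finset.card_union_le _ _)
  simp only [← Nat.range_succ_eq_Icc_zero, ← Nat.count_eq_card_filter_range] at hcard
  exact (Nat.add_le_add_iff_left).1 (hN.trans hcard)

theorem admissible_of_prime {h : Fin k → ℕ} (hmono : StrictMono h) (hprime : ∀ i, (h i).Prime)
    (hlt : ∀ i, k < h i) : Admissible fun i ↦ (h i : ℤ) := by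
  refine ⟨Nat.strictMono_cast.comp hmono, fun p hp ↦ ?_⟩
  have : Fact p.Prime := ⟨hp⟩
  rcases le_or_gt p k with hpk | hkp
  · refine ⟨0, fun i hi ↦ ?_⟩
    rw [Int.cast_natCast, ZMod.natCast_eq_zero_iff, Nat.prime_dvd_prime_iff_eq hp (hprime i)] at hi
    exact (hlt i).not_ge (hi ▸ hpk)
  · by_contra! hsurj
    have hcard := Fintype.card_le_of_surjective _ hsurj
    rw [ZMod.card, Fintype.card_fin] at hcard
    exact hkp.not_ge hcard

theorem exists_admissible_of_primeCounting_add_self_le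
    (hN : Nat.primeCounting k + k ≤ Nat.primeCounting N) :
    ∃ h : Fin k → ℤ, Admissible h ∧ ∀ i, h i ∈ Set.Ioc (k : ℤ) N := by
  obtain ⟨Q, hQ, hcard⟩ := Finset.exists_subset_card_eq (le_card_filter_prime_Ioc hN)
  have hmem (i : Fin k) := Finset.mem_filter.1 (hQ (Q.orderEmbOfFin_mem hcard i))
  refine ⟨fun i ↦ (Q.orderEmbOfFin hcard i : ℤ), ?_, fun i ↦ ?_⟩
  · exact admissible_of_prime (Q.orderEmbOfFin hcard).strictMono (fun i ↦ (hmem i).2)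
      fun i ↦ (Finset.mem_Ioc.1 (hmem i).1).1
  · simpa only [Set.mem_Ioc, Nat.cast_lt, Nat.cast_le] using Finset.mem_Ioc.1 (hmem i).1

end PrimeTuples

/-- **H(k) ≤ k log k + k log log k − k + o(k)**: for every `ε > 0` there is `K` such
that for all `k ≥ K` there is an admissible `k`-tuple of diameter at most
`k log k + k log log k − k + ε k`. -/
theorem Hk_asymptotic_upper_bound :
    ∀ ε : ℝ, 0 < ε → ∃ K : ℕ, ∀ k : ℕ, ∀ hk : K + 1 ≤ k,
      ∃ h : Fin k → ℤ, Admissible h ∧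
        ((h ⟨k - 1, by omega⟩ - h ⟨0, by omega⟩ : ℤ) : ℝ) ≤
          k * Real.log k + k * Real.log (Real.log k) - k + ε * k := by
  intro ε hε
  obtain ⟨K, hK⟩ := eventually_atTop.1 (eventually_primeCounting_add_self_le hε)
  refine ⟨K, fun k hk ↦ ?_⟩
  obtain ⟨h, hadm, hmem⟩ := exists_admissible_of_primeCounting_add_self_le (hK k (by omega))
  refine ⟨h, hadm, ?_⟩
  set x : ℝ := k * intervalRatio ε (Real.log k) with hx
  have hfirst : (k : ℝ) < h ⟨0, by omega⟩ := by exact_mod_cast (hmem ⟨0, by omega⟩).1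
  have hlast : (h ⟨k - 1, by omega⟩ : ℝ) ≤ ⌊x⌋₊ := by exact_mod_cast (hmem ⟨k - 1, by omega⟩).2
  have hkx : k < ⌊x⌋₊ := by
    exact_mod_cast (hmem ⟨0, by omega⟩).1.trans_le (hmem ⟨0, by omega⟩).2
  calc ((h ⟨k - 1, by omega⟩ - h ⟨0, by omega⟩ : ℤ) : ℝ)
      = h ⟨k - 1, by omega⟩ - h ⟨0, by omega⟩ := Int.cast_sub _ _
    _ ≤ x - k := sub_le_sub
        (hlast.trans (Nat.floor_le (Nat.pos_of_floor_pos (Nat.zero_lt_of_lt hkx)).le)) hfirst.le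
    _ = k * Real.log k + k * Real.log (Real.log k) - k + ε * k := by rw [hx, intervalRatio]; ring
end

section
/- Set ε := 1/4. There exists a square-integrable function F : [0,∞)³ → ℝ, symmetric in its three variables and supported on the simplex {(t_1,t_2,t_3) ∈ [0,∞)³ : t_1+t_2+t_3 ≤ 3/2}, which is not almost everywhere zero, such that ∫_0^∞ F(t_1,t_2,t_3) dt_3 = 0 whenever t_1,t_2 ≥ 0 with t_1+t_2 > 1+ε = 5/4, and such that 3·∫_{t_1+t_2 ≤ 1−ε} (∫_0^∞ F(t_1,t_2,t_3) dt_3)² dt_1 dt_2 > 2·∫_{[0,∞)³} F(t_1,t_2,t_3)² dt_1 dt_2 dt_3. -/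
open MeasureTheory

/-!
Write `J` for the marginal of `F` in the third variable. Since `J² ≥ 4 J g - 4 g²` for every
function `g` on the region `x + y ≤ 1 - ε`, the quadratic functional `3 ∫ J²` is bounded below by
`4 ⟨F, S⟩ - 12 ∫ g²`, where `S(x, y, z) = g(y, z) + g(x, z) + g(x, y)`. Hence it suffices to find
`F` with `2 ⟨F, S⟩ - ‖F‖² > 6 ∫ g²`. Maximizing the left side over all `F` would give `F = S`, but
the marginal condition constrains `F` where a pairwise sum exceeds `1 + ε`. So `F` is taken to be
`S` on the core of the simplex, where all pairwise sums are at most `1 + ε`, and is modified outside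
by corrections whose own marginals vanish. These regions are disjoint, so that `2 ⟨F, S⟩ - ‖F‖²` is
a sum of explicit integrals of polynomials, once the polynomial `g` is fixed.
-/

namespace ThreeDimCutoff

section BoundedCompactSupport

variable {X Y : Type*} [MeasurableSpace X] [MeasurableSpace Y] {f g : X → ℝ}

/-- Bounded measurable functions, which serve as multipliers of `BoundedCompactSupport`. -/
structure BoundedMeasurable (f : X → ℝ) : Prop where
  measurable : Measurable f
  exists_bound : ∃ C, ∀ x, |f x| ≤ C

namespace BoundedMeasurable

lemma add (hf : BoundedMeasurable f) (hg : BoundedMeasurable g) : BoundedMeasurable (f + g) := by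
  obtain ⟨C, hC⟩ := hf.exists_bound
  obtain ⟨D, hD⟩ := hg.exists_bound
  exact ⟨hf.measurable.add hg.measurable, C + D,
    fun x => (abs_add_le _ _).trans (add_le_add (hC x) (hD x))⟩

lemma sub (hf : BoundedMeasurable f) (hg : BoundedMeasurable g) : BoundedMeasurable (f - g) := by
  obtain ⟨C, hC⟩ := hf.exists_bound
  obtain ⟨D, hD⟩ := hg.exists_bound
  exact ⟨hf.measurable.sub hg.measurable, C + D,
    fun x => (abs_sub _ _).trans (add_le_add (hC x) (hD x))⟩

lemma mul (hf : BoundedMeasurable f) (hg : BoundedMeasurable g) : BoundedMeasurable (f * g) := by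
  obtain ⟨C, hC⟩ := hf.exists_bound
  obtain ⟨D, hD⟩ := hg.exists_bound
  refine ⟨hf.measurable.mul hg.measurable, C * D, fun x => ?_⟩
  rw [Pi.mul_apply, abs_mul]
  exact mul_le_mul (hC x) (hD x) (abs_nonneg _) ((abs_nonneg _).trans (hC x))

lemma sq (hf : BoundedMeasurable f) : BoundedMeasurable (f ^ 2) := by
  simpa only [pow_two] using hf.mul hf

lemma const (c : ℝ) : BoundedMeasurable fun _ : X => c :=
  ⟨measurable_const, |c|, fun _ => le_rfl⟩

lemma comp {φ : Y → X} (hf : BoundedMeasurable f) (hφ : Measurable φ) :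
    BoundedMeasurable (f ∘ φ) :=
  ⟨hf.measurable.comp hφ, hf.exists_bound.imp fun _ hC _ => hC _⟩

end BoundedMeasurable

/-- Bounded measurable functions of compact support: a class closed under the pointwise
operations and under partial integration, all of whose members are integrable. -/
structure BoundedCompactSupport [TopologicalSpace X] (f : X → ℝ) : Prop
    extends BoundedMeasurable f where
  hasCompactSupport : HasCompactSupport f

namespace BoundedCompactSupport

variable [TopologicalSpace X] [TopologicalSpace Y]

lemma add (hf : BoundedCompactSupport f) (hg : BoundedCompactSupport g) :
    BoundedCompactSupport (f + g) :=
  ⟨hf.toBoundedMeasurable.add hg.toBoundedMeasurable,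
    hf.hasCompactSupport.add hg.hasCompactSupport⟩

lemma mul (hf : BoundedCompactSupport f) (hg : BoundedMeasurable g) :
    BoundedCompactSupport (f * g) :=
  ⟨hf.toBoundedMeasurable.mul hg, hf.hasCompactSupport.mul_right⟩

lemma sq (hf : BoundedCompactSupport f) : BoundedCompactSupport (f ^ 2) := by
  simpa only [pow_two] using hf.mul hf.toBoundedMeasurable

lemma smul (c : ℝ) (hf : BoundedCompactSupport f) : BoundedCompactSupport (c • f) := by
  have h := hf.mul (.const c)
  rwa [mul_comm] at h

lemma sub (hf : BoundedCompactSupport f) (hg : BoundedCompactSupport g) :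
    BoundedCompactSupport (f - g) := by
  simpa only [neg_one_smul, ← sub_eq_add_neg] using hf.add (hg.smul (-1))

lemma comp_isClosedEmbedding [OpensMeasurableSpace Y] [BorelSpace X] {φ : Y → X}
    (hf : BoundedCompactSupport f) (hφ : Topology.IsClosedEmbedding φ) :
    BoundedCompactSupport (f ∘ φ) :=
  ⟨hf.toBoundedMeasurable.comp hφ.continuous.measurable,
    hf.hasCompactSupport.comp_isClosedEmbedding hφ⟩

lemma integrable [OpensMeasurableSpace X] {μ : Measure X} [IsFiniteMeasureOnCompacts μ]
    (hf : BoundedCompactSupport f) : Integrable f μ := by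
  obtain ⟨C, hC⟩ := hf.exists_bound
  rw [← integrableOn_iff_integrable_of_support_subset (subset_tsupport f)]
  exact Measure.integrableOn_of_bounded hf.hasCompactSupport.isCompact.measure_lt_top.ne
    hf.measurable.aestronglyMeasurable (.of_forall hC)

lemma ite_of_continuous [R1Space X] [OpensMeasurableSpace X] {p : X → Prop} [DecidablePred p]
    {K : Set X} (hp : MeasurableSet {x | p x}) (hK : IsCompact K) (hpK : ∀ x, p x → x ∈ K)
    (hf : Continuous f) : BoundedCompactSupport fun x => if p x then f x else 0 := by
  obtain ⟨C, hC⟩ := hK.exists_bound_of_continuousOn hf.continuousOn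
  refine ⟨⟨.ite hp hf.measurable measurable_const, max C 0, fun x => ?_⟩,
    .intro hK fun x hx => if_neg (mt (hpK x) hx)⟩
  split_ifs with h
  · exact (hC x (hpK x h)).trans (le_max_left _ _)
  · simp

lemma integral_prod_right [R1Space X] [OpensMeasurableSpace Y]
    {μ : Measure Y} [SFinite μ] [IsFiniteMeasureOnCompacts μ] {F : X × Y → ℝ}
    (hF : BoundedCompactSupport F) : BoundedCompactSupport fun x => ∫ y, F (x, y) ∂μ := by
  obtain ⟨C, hC⟩ := hF.exists_bound
  have hK : IsCompact (tsupport F) := hF.hasCompactSupport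
  have eq_zero_of_fst : ∀ x ∉ Prod.fst '' tsupport F, ∀ y, F (x, y) = 0 := fun x hx y =>
    image_eq_zero_of_notMem_tsupport fun h => hx ⟨(x, y), h, rfl⟩
  have eq_zero_of_snd : ∀ x, ∀ y ∉ Prod.snd '' tsupport F, F (x, y) = 0 := fun x y hy =>
    image_eq_zero_of_notMem_tsupport fun h => hy ⟨(x, y), h, rfl⟩
  refine ⟨⟨hF.measurable.stronglyMeasurable.integral_prod_right'.measurable,
    C * μ.real (Prod.snd '' tsupport F), fun x => ?_⟩, .intro (hK.image continuous_fst) ?_⟩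
  · rw [← setIntegral_eq_integral_of_forall_compl_eq_zero (eq_zero_of_snd x)]
    exact norm_setIntegral_le_of_norm_le_const (f := fun y => F (x, y)) (C := C)
      (hK.image continuous_snd).measure_lt_top fun y _ => hC (x, y)
  · intro x hx
    simp only [eq_zero_of_fst x hx, integral_zero]

end BoundedCompactSupport

end BoundedCompactSupport

section IteratedIntegrals

variable {a b : ℝ}

lemma integral_ite_Ioc {f : ℝ → ℝ} (hab : a ≤ b) :
    ∫ x, (if a < x ∧ x ≤ b then f x else 0) = ∫ x in a..b, f x := by
  rw [intervalIntegral.integral_of_le hab, ← integral_indicator measurableSet_Ioc]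
  simp only [Set.indicator_apply, Set.mem_Ioc]

lemma integrable_ite_Ioc {f : ℝ → ℝ} (hf : Continuous f) :
    Integrable fun x => if a < x ∧ x ≤ b then f x else 0 :=
  (BoundedCompactSupport.ite_of_continuous measurableSet_Ioc isCompact_Icc
    (fun _ => Set.mem_Icc_of_Ioc) hf).integrable

lemma integral_prod_eq_iterated {f P : ℝ → ℝ → ℝ} {l u : ℝ → ℝ}
    (hf : Integrable ↿f) (hab : a ≤ b) (hlu : ∀ x, a < x → x ≤ b → l x ≤ u x)
    (hfP : ∀ x y, f x y = if (a < x ∧ x ≤ b) ∧ l x < y ∧ y ≤ u x then P x y else 0) :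
    ∫ q : ℝ × ℝ, f q.1 q.2 = ∫ x in a..b, ∫ y in l x..u x, P x y := by
  rw [← integral_ite_Ioc hab]
  refine (integral_prod _ hf).trans (integral_congr_ae (.of_forall fun x => ?_))
  by_cases hx : a < x ∧ x ≤ b
  · simp only [Function.HasUncurry.uncurry, id, hfP, hx, true_and, and_self, if_true,
      integral_ite_Ioc (hlu x hx.1 hx.2)]
  · simp only [Function.HasUncurry.uncurry, id, hfP, hx, false_and, if_false, integral_zero]

/-- The integral over `ℝ³` of a function of three real variables. -/
noncomputable def tripleIntegral (f : ℝ → ℝ → ℝ → ℝ) : ℝ :=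
  ∫ q : ℝ × ℝ × ℝ, f q.1 q.2.1 q.2.2

variable {f g : ℝ → ℝ → ℝ → ℝ}

lemma tripleIntegral_eq_iterated {P : ℝ → ℝ → ℝ → ℝ} {l u : ℝ → ℝ} {l' u' : ℝ → ℝ → ℝ}
    (hf : Integrable ↿f) (hab : a ≤ b) (hlu : ∀ x, a < x → x ≤ b → l x ≤ u x)
    (hlu' : ∀ x y, a < x → x ≤ b → l x < y → y ≤ u x → l' x y ≤ u' x y)
    (hfP : ∀ x y z, f x y z = if (a < x ∧ x ≤ b) ∧ (l x < y ∧ y ≤ u x) ∧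
      (l' x y < z ∧ z ≤ u' x y) then P x y z else 0) :
    tripleIntegral f = ∫ x in a..b, ∫ y in l x..u x, ∫ z in l' x y..u' x y, P x y z := by
  rw [← integral_ite_Ioc hab]
  refine (integral_prod _ hf).trans (integral_congr_ae ?_)
  filter_upwards [hf.prod_right_ae] with x hfx
  split_ifs with hx
  · rw [← integral_ite_Ioc (hlu x hx.1 hx.2)]
    refine (integral_prod _ hfx).trans (integral_congr_ae (.of_forall fun y => ?_))
    by_cases hy : l x < y ∧ y ≤ u x
    · simp only [Function.HasUncurry.uncurry, id, hfP, hx, hy, true_and, and_self, if_true,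
        integral_ite_Ioc (hlu' x y hx.1 hx.2 hy.1 hy.2)]
    · simp only [Function.HasUncurry.uncurry, id, hfP, hy, false_and, and_false, if_false,
        integral_zero]
  · simp only [Function.HasUncurry.uncurry, id, hfP, hx, false_and, if_false, integral_zero]

lemma tripleIntegral_add (hf : Integrable ↿f) (hg : Integrable ↿g) :
    tripleIntegral (f + g) = tripleIntegral f + tripleIntegral g :=
  integral_add hf hg

lemma tripleIntegral_sub (hf : Integrable ↿f) (hg : Integrable ↿g) :
    tripleIntegral (f - g) = tripleIntegral f - tripleIntegral g :=
  integral_sub hf hg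

lemma tripleIntegral_smul (c : ℝ) : tripleIntegral (c • f) = c * tripleIntegral f :=
  integral_const_mul _ _

lemma tripleIntegral_mono (hf : Integrable ↿f) (hg : Integrable ↿g)
    (hfg : ∀ x y z, f x y z ≤ g x y z) : tripleIntegral f ≤ tripleIntegral g :=
  integral_mono hf hg fun _ => hfg _ _ _

lemma tripleIntegral_eq_integral_assoc (f : ℝ → ℝ → ℝ → ℝ) :
    tripleIntegral f = ∫ r : (ℝ × ℝ) × ℝ, f r.1.1 r.1.2 r.2 :=
  (volume_preserving_prodAssoc.integral_comp (MeasurableEquiv.measurableEmbedding _)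
    (fun q : ℝ × ℝ × ℝ => f q.1 q.2.1 q.2.2)).symm

lemma tripleIntegral_swap_left (f : ℝ → ℝ → ℝ → ℝ) :
    tripleIntegral (fun x y z => f y x z) = tripleIntegral f := by
  have measurePreserving := (Measure.measurePreserving_swap (μ := (volume : Measure ℝ))
    (ν := (volume : Measure ℝ))).prod (MeasurePreserving.id (volume : Measure ℝ))
  rw [tripleIntegral_eq_integral_assoc, tripleIntegral_eq_integral_assoc]
  exact measurePreserving.integral_comp
    (MeasurableEquiv.prodComm.prodCongr (.refl ℝ)).measurableEmbedding
    fun r : (ℝ × ℝ) × ℝ => f r.1.1 r.1.2 r.2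

lemma tripleIntegral_swap_right (f : ℝ → ℝ → ℝ → ℝ) :
    tripleIntegral (fun x y z => f x z y) = tripleIntegral f := by
  have measurePreserving := (MeasurePreserving.id (volume : Measure ℝ)).prod
    (Measure.measurePreserving_swap (μ := (volume : Measure ℝ)) (ν := (volume : Measure ℝ)))
  exact measurePreserving.integral_comp
    ((MeasurableEquiv.refl ℝ).prodCongr .prodComm).measurableEmbedding
    fun q : ℝ × ℝ × ℝ => f q.1 q.2.1 q.2.2

lemma tripleIntegral_rotate (f : ℝ → ℝ → ℝ → ℝ) :
    tripleIntegral (fun x y z => f z x y) = tripleIntegral f :=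
  (tripleIntegral_swap_right fun x y z => f y x z).trans (tripleIntegral_swap_left f)

namespace BoundedCompactSupport

lemma assoc (hf : BoundedCompactSupport ↿f) :
    BoundedCompactSupport fun r : (ℝ × ℝ) × ℝ => f r.1.1 r.1.2 r.2 :=
  hf.comp_isClosedEmbedding (Homeomorph.prodAssoc ℝ ℝ ℝ).isClosedEmbedding

lemma swap_left (hf : BoundedCompactSupport ↿f) :
    BoundedCompactSupport ↿fun x y z => f y x z :=
  hf.assoc.comp_isClosedEmbedding (φ := fun q : ℝ × ℝ × ℝ => ((q.2.1, q.1), q.2.2))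
    ((Homeomorph.prodAssoc ℝ ℝ ℝ).symm.trans
      ((Homeomorph.prodComm ℝ ℝ).prodCongr (.refl ℝ))).isClosedEmbedding

lemma swap_right (hf : BoundedCompactSupport ↿f) :
    BoundedCompactSupport ↿fun x y z => f x z y :=
  hf.comp_isClosedEmbedding
    ((Homeomorph.refl ℝ).prodCongr (Homeomorph.prodComm ℝ ℝ)).isClosedEmbedding

lemma integrable_slice (hf : BoundedCompactSupport ↿f) (x y : ℝ) :
    Integrable fun z => f x y z := by
  have isClosedEmbedding : Topology.IsClosedEmbedding fun z : ℝ => (x, y, z) :=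
    .of_continuous_injective_isClosedMap (by fun_prop) (fun _ _ => by simp)
      ((isClosedMap_prodMk_left x).comp (isClosedMap_prodMk_left y))
  exact (hf.comp_isClosedEmbedding isClosedEmbedding).integrable

end BoundedCompactSupport

lemma tripleIntegral_eq_integral_marginal (hf : BoundedCompactSupport ↿f) :
    tripleIntegral f = ∫ p : ℝ × ℝ, ∫ z, f p.1 p.2 z :=
  (tripleIntegral_eq_integral_assoc f).trans (integral_prod _ hf.assoc.integrable)

/-- The sum of `f` over the choice of a distinguished first variable; it is symmetric in all
three variables as soon as `f` is symmetric in the last two. -/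
def symmetrization (f : ℝ → ℝ → ℝ → ℝ) : ℝ → ℝ → ℝ → ℝ :=
  f + (fun x y z => f y x z) + fun x y z => f z x y

lemma symmetrization_apply (f : ℝ → ℝ → ℝ → ℝ) (x y z : ℝ) :
    symmetrization f x y z = f x y z + f y x z + f z x y :=
  rfl

lemma symmetrization_swap_left (hf : ∀ x y z, f x y z = f x z y) (x y z : ℝ) :
    symmetrization f x y z = symmetrization f y x z := by
  simp only [symmetrization_apply, hf z x y, add_comm (f x y z)]

lemma symmetrization_swap_right (hf : ∀ x y z, f x y z = f x z y) (x y z : ℝ) :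
    symmetrization f x y z = symmetrization f x z y := by
  simp only [symmetrization_apply, hf x y z, hf y x z, hf z x y, add_right_comm]

lemma BoundedCompactSupport.symmetrization (hf : BoundedCompactSupport ↿f) :
    BoundedCompactSupport ↿(symmetrization f) :=
  (hf.add hf.swap_left).add hf.swap_left.swap_right

lemma tripleIntegral_symmetrization (hf : BoundedCompactSupport ↿f) :
    tripleIntegral (symmetrization f) = 3 * tripleIntegral f := by
  rw [symmetrization, tripleIntegral_add (hf.add hf.swap_left).integrable
    hf.swap_left.swap_right.integrable, tripleIntegral_add hf.integrable hf.swap_left.integrable,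
    tripleIntegral_swap_left f, tripleIntegral_rotate f]
  ring

end IteratedIntegrals

section Duality

variable {F : ℝ → ℝ → ℝ → ℝ} {g : ℝ → ℝ → ℝ}

lemma mul_symmetrization (hleft : ∀ x y z, F x y z = F y x z)
    (hright : ∀ x y z, F x y z = F x z y) (f : ℝ → ℝ → ℝ → ℝ) :
    F * symmetrization f = symmetrization (F * f) := by
  funext x y z
  simp only [Pi.mul_apply, symmetrization_apply, ← hleft x y z, hleft z x y, ← hright x y z]
  ring

lemma tripleIntegral_mul_symmetrization_snd_thd (hF : BoundedCompactSupport ↿F)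
    (hleft : ∀ x y z, F x y z = F y x z) (hright : ∀ x y z, F x y z = F x z y)
    (hg : BoundedMeasurable ↿g) :
    tripleIntegral (F * symmetrization fun _ y z => g y z) =
      3 * ∫ p : ℝ × ℝ, (∫ z, F p.1 p.2 z) * g p.1 p.2 := by
  have hFg : BoundedCompactSupport ↿fun x y z => F x y z * g x y :=
    hF.mul (hg.comp (φ := fun q : ℝ × ℝ × ℝ => (q.1, q.2.1)) (by fun_prop))
  rw [mul_symmetrization hleft hright, tripleIntegral_symmetrization
    (hF.mul (hg.comp measurable_snd)), ← tripleIntegral_rotate]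
  have rotate_F : ∀ x y z, F z x y = F x y z := fun x y z => (hleft z x y).trans (hright x z y)
  simp only [Pi.mul_apply, rotate_F, tripleIntegral_eq_integral_marginal hFg, integral_mul_const]

/-- The elementary bound `J² ≥ 4Jg - 4g²` replaces the quadratic functional of the marginal `J` by
a linear one, represented on symmetric functions by the symmetrization of `g`. -/
lemma le_setIntegral_marginal_sq {T : Set (ℝ × ℝ)} (hT : MeasurableSet T)
    (hF : BoundedCompactSupport ↿F) (hleft : ∀ x y z, F x y z = F y x z)
    (hright : ∀ x y z, F x y z = F x z y) (hg : BoundedCompactSupport ↿g)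
    (hgT : ∀ p ∉ T, g p.1 p.2 = 0) :
    4 * tripleIntegral (F * symmetrization fun _ y z => g y z) - 12 * ∫ p : ℝ × ℝ, g p.1 p.2 ^ 2 ≤
      3 * ∫ p in T, (∫ z, F p.1 p.2 z) ^ 2 := by
  set J : ℝ × ℝ → ℝ := fun p => ∫ z, F p.1 p.2 z
  have hJ : BoundedCompactSupport J := hF.assoc.integral_prod_right
  have hJg : Integrable fun p => J p * g p.1 p.2 := (hJ.mul hg.toBoundedMeasurable).integrable
  have hgg : Integrable fun p : ℝ × ℝ => g p.1 p.2 ^ 2 := hg.sq.integrable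
  have hJJ : Integrable fun p => J p ^ 2 := hJ.sq.integrable
  have hlinear : Integrable fun p => 4 * (J p * g p.1 p.2) - 4 * g p.1 p.2 ^ 2 :=
    (hJg.const_mul 4).sub (hgg.const_mul 4)
  have key : 4 * (∫ p, J p * g p.1 p.2) - 4 * ∫ p : ℝ × ℝ, g p.1 p.2 ^ 2 ≤ ∫ p in T, J p ^ 2 :=
    calc 4 * (∫ p, J p * g p.1 p.2) - 4 * ∫ p : ℝ × ℝ, g p.1 p.2 ^ 2
        = ∫ p, 4 * (J p * g p.1 p.2) - 4 * g p.1 p.2 ^ 2 := by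
          rw [integral_sub (hJg.const_mul 4) (hgg.const_mul 4), integral_const_mul,
            integral_const_mul]
      _ = ∫ p in T, 4 * (J p * g p.1 p.2) - 4 * g p.1 p.2 ^ 2 :=
          (setIntegral_eq_integral_of_forall_compl_eq_zero fun p hp => by simp [hgT p hp]).symm
      _ ≤ ∫ p in T, J p ^ 2 := setIntegral_mono_on hlinear.integrableOn hJJ.integrableOn hT
          fun p _ => by linarith [sq_nonneg (J p - 2 * g p.1 p.2)]
  rw [tripleIntegral_mul_symmetrization_snd_thd hF hleft hright hg.toBoundedMeasurable]
  linarith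

end Duality

section Construction

/-- The polynomial `1 + (1 - s)(3 - 4s) - xy` with `s = x + y`; its coefficients are a numerical
choice for which `cutoff` beats the required constant. -/
def profilePoly (x y : ℝ) : ℝ :=
  4 - 7 * (x + y) + 4 * (x + y) ^ 2 - x * y

/-- The test function on the region `x + y ≤ 1 - ε` against which the marginal of `cutoff` is
paired. -/
noncomputable def profile (x y : ℝ) : ℝ :=
  if 0 < x ∧ 0 < y ∧ x + y ≤ 3 / 4 then profilePoly x y else 0

/-- The sum of the profiles in the three pairs of variables: the function representing the
functional `F ↦ 3 ∫ F(x, y, z) profile(x, y)` on symmetric `F`. -/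
noncomputable def profileSum : ℝ → ℝ → ℝ → ℝ :=
  symmetrization fun _ y z => profile y z

/-- The indicator of the part of the simplex where all pairwise sums are at most `1 + ε`, so that
the marginal condition does not see it. -/
noncomputable def core (x y z : ℝ) : ℝ :=
  if 0 < x ∧ 0 < y ∧ 0 < z ∧ x + y ≤ 5 / 4 ∧ x + z ≤ 5 / 4 ∧ y + z ≤ 5 / 4 ∧ x + y + z ≤ 3 / 2
  then 1 else 0

/-- The part of the region `1 + ε < y + z` where both `profile x y` and `profile x z` are
available. -/
noncomputable def edgeInner (x y z : ℝ) : ℝ :=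
  if 0 < x ∧ 5 / 4 < y + z ∧ x + y ≤ 3 / 4 ∧ x + z ≤ 3 / 4 then 1 else 0

/-- The part of the region `1 + ε < y + z` used to cancel the mass of `edgeInner` in `x`. -/
noncomputable def edgeOuter (x y z : ℝ) : ℝ :=
  if 5 / 4 < y + z ∧ y ≤ 3 / 4 ∧ z ≤ 3 / 4 ∧ 3 / 4 < x + y ∧ 3 / 4 < x + z ∧ x + y + z ≤ 3 / 2
  then 1 else 0

/-- A correction living on `1 + ε < y + z` whose integral in `x` vanishes. -/
noncomputable def edgeCorrection (x y z : ℝ) : ℝ :=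
  edgeInner x y z - edgeOuter x y z

/-- The tip of the corner of the simplex where `x` is large, in which both `x + y` and `x + z`
exceed `1 + ε`. -/
noncomputable def cornerTip (x y z : ℝ) : ℝ :=
  if x ≤ 5 / 4 ∧ 5 / 4 < x + y ∧ 5 / 4 < x + z ∧ x + y + z ≤ 3 / 2 then 5 / 4 - x else 0

/-- The side of the corner where `x` is large in which only `x + y` exceeds `1 + ε`, weighted so
that it has the same integral in `z` as `cornerTip`. -/
noncomputable def cornerSide (x y z : ℝ) : ℝ :=
  if 0 < z ∧ x + z ≤ 5 / 4 ∧ 5 / 4 < x + y ∧ y ≤ 1 / 4 then 1 / 4 - y else 0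

/-- A correction living in the corner where `x` is large, whose integral in `z` vanishes on
`1 + ε < x + y` and whose integral in `y` vanishes on `1 + ε < x + z`. The factor `-11` is a
numerically good choice. -/
noncomputable def cornerCorrection (x y z : ℝ) : ℝ :=
  -11 * (cornerTip x y z - cornerSide x y z - cornerSide x z y)

/-- The total correction, with distinguished first variable. -/
noncomputable def correction (x y z : ℝ) : ℝ :=
  edgeCorrection x y z + cornerCorrection x y z

/-- The piecewise polynomial `F` of the theorem. -/
noncomputable def cutoff : ℝ → ℝ → ℝ → ℝ :=
  core * profileSum + symmetrization correction

variable {x y z : ℝ}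

lemma profilePoly_comm (x y : ℝ) : profilePoly x y = profilePoly y x := by
  rw [profilePoly, profilePoly, add_comm x y, mul_comm x y]

lemma profile_comm (x y : ℝ) : profile x y = profile y x := by
  grind [profile, profilePoly_comm]

lemma core_swap_left (x y z : ℝ) : core x y z = core y x z := by
  grind [core]

lemma core_swap_right (x y z : ℝ) : core x y z = core x z y := by
  grind [core]

lemma edgeCorrection_swap (x y z : ℝ) : edgeCorrection x y z = edgeCorrection x z y := by
  grind [edgeCorrection, edgeInner, edgeOuter]

lemma cornerTip_swap (x y z : ℝ) : cornerTip x y z = cornerTip x z y := by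
  grind [cornerTip]

lemma correction_swap (x y z : ℝ) : correction x y z = correction x z y := by
  grind [correction, edgeCorrection_swap, cornerCorrection, cornerTip_swap]

lemma profileSum_apply (x y z : ℝ) :
    profileSum x y z = profile y z + profile x z + profile x y :=
  rfl

lemma profileSum_swap_left (x y z : ℝ) : profileSum x y z = profileSum y x z :=
  symmetrization_swap_left (fun _ => profile_comm) x y z

lemma profileSum_swap_right (x y z : ℝ) : profileSum x y z = profileSum x z y :=
  symmetrization_swap_right (fun _ => profile_comm) x y z

lemma cutoff_apply (x y z : ℝ) :
    cutoff x y z = core x y z * profileSum x y z + symmetrization correction x y z :=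
  rfl

lemma cutoff_swap_left (x y z : ℝ) : cutoff x y z = cutoff y x z := by
  rw [cutoff_apply, cutoff_apply, core_swap_left, profileSum_swap_left,
    symmetrization_swap_left correction_swap]

lemma cutoff_swap_right (x y z : ℝ) : cutoff x y z = cutoff x z y := by
  rw [cutoff_apply, cutoff_apply, core_swap_right, profileSum_swap_right,
    symmetrization_swap_right correction_swap]

lemma of_edgeCorrection_ne_zero (h : edgeCorrection x y z ≠ 0) :
    0 < x ∧ 5 / 4 < y + z ∧ y ≤ 3 / 4 ∧ z ≤ 3 / 4 ∧ x + y + z ≤ 3 / 2 := by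
  grind [edgeCorrection, edgeInner, edgeOuter]

lemma of_cornerCorrection_ne_zero (h : cornerCorrection x y z ≠ 0) :
    1 < x ∧ 0 < y ∧ 0 < z ∧ (5 / 4 < x + y ∨ 5 / 4 < x + z) ∧ x + y + z ≤ 3 / 2 := by
  grind [cornerCorrection, cornerTip, cornerSide]

lemma edgeCorrection_mul_cornerCorrection (x y z : ℝ) :
    edgeCorrection x y z * cornerCorrection x y z = 0 := by
  by_contra h
  obtain ⟨hedge, hcorner⟩ := mul_ne_zero_iff.mp h
  linarith [of_edgeCorrection_ne_zero hedge, of_cornerCorrection_ne_zero hcorner]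

lemma of_correction_ne_zero (h : correction x y z ≠ 0) :
    (0 < x ∧ 5 / 4 < y + z ∧ y ≤ 3 / 4 ∧ z ≤ 3 / 4 ∧ x + y + z ≤ 3 / 2) ∨
      1 < x ∧ 0 < y ∧ 0 < z ∧ (5 / 4 < x + y ∨ 5 / 4 < x + z) ∧ x + y + z ≤ 3 / 2 := by
  by_cases hedge : edgeCorrection x y z = 0
  · exact .inr (of_cornerCorrection_ne_zero (by simpa only [correction, hedge, zero_add] using h))
  · exact .inl (of_edgeCorrection_ne_zero hedge)

lemma correction_mul_correction (x y z : ℝ) : correction x y z * correction y x z = 0 := by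
  by_contra h
  obtain ⟨hx, hy⟩ := mul_ne_zero_iff.mp h
  grind [of_correction_ne_zero hx, of_correction_ne_zero hy]

lemma core_mul_correction (x y z : ℝ) : core x y z * correction x y z = 0 := by
  by_contra h
  obtain ⟨hcore, hcorrection⟩ := mul_ne_zero_iff.mp h
  grind [core, of_correction_ne_zero hcorrection]

lemma correction_eq_zero (h : ¬(0 < x ∧ 0 < y ∧ 0 < z ∧ x + y + z ≤ 3 / 2)) :
    correction x y z = 0 := by
  by_contra hcorrection
  grind [of_correction_ne_zero hcorrection]

lemma cutoff_eq_zero (h : ¬(0 < x ∧ 0 < y ∧ 0 < z ∧ x + y + z ≤ 3 / 2)) :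
    cutoff x y z = 0 := by
  rw [cutoff_apply, symmetrization_apply, correction_eq_zero h, correction_eq_zero (by grind),
    correction_eq_zero (by grind), core, if_neg (by grind)]
  ring

end Construction

section Regularity

@[fun_prop]
lemma continuous_profilePoly {X : Type*} [TopologicalSpace X] {f g : X → ℝ} (hf : Continuous f)
    (hg : Continuous g) : Continuous fun x => profilePoly (f x) (g x) := by
  unfold profilePoly
  fun_prop

lemma boundedCompactSupport_profile : BoundedCompactSupport ↿profile :=
  .ite_of_continuous (f := fun p : ℝ × ℝ => profilePoly p.1 p.2) (K := Set.Icc (0, 0) (1, 1))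
    (by measurability) isCompact_Icc (fun p hp => by grind [Prod.le_def])
    (by fun_prop)

lemma boundedMeasurable_profile_fst_snd :
    BoundedMeasurable ↿fun x y (_ : ℝ) => profile x y :=
  boundedCompactSupport_profile.toBoundedMeasurable.comp
    (φ := fun q : ℝ × ℝ × ℝ => (q.1, q.2.1)) (by fun_prop)

lemma boundedMeasurable_profile_fst_thd :
    BoundedMeasurable ↿fun x (_ : ℝ) z => profile x z :=
  boundedCompactSupport_profile.toBoundedMeasurable.comp
    (φ := fun q : ℝ × ℝ × ℝ => (q.1, q.2.2)) (by fun_prop)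

lemma boundedMeasurable_profile_snd_thd :
    BoundedMeasurable ↿fun (_ : ℝ) y z => profile y z :=
  boundedCompactSupport_profile.toBoundedMeasurable.comp measurable_snd

lemma boundedMeasurable_profileSum : BoundedMeasurable ↿profileSum :=
  (boundedMeasurable_profile_snd_thd.add boundedMeasurable_profile_fst_thd).add
    boundedMeasurable_profile_fst_snd

lemma boundedCompactSupport_ite {p : ℝ → ℝ → ℝ → Prop} [∀ x y z, Decidable (p x y z)]
    {f : ℝ → ℝ → ℝ → ℝ} (hp : MeasurableSet {q : ℝ × ℝ × ℝ | p q.1 q.2.1 q.2.2})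
    (hbox : ∀ x y z, p x y z → (-2 ≤ x ∧ -2 ≤ y ∧ -2 ≤ z) ∧ x ≤ 2 ∧ y ≤ 2 ∧ z ≤ 2)
    (hf : Continuous ↿f) : BoundedCompactSupport ↿fun x y z => if p x y z then f x y z else 0 :=
  .ite_of_continuous (K := Set.Icc (-2, -2, -2) (2, 2, 2)) hp isCompact_Icc
    (fun _ => hbox _ _ _) hf

lemma boundedCompactSupport_core : BoundedCompactSupport ↿core :=
  boundedCompactSupport_ite (by measurability) (by grind) continuous_const

lemma boundedCompactSupport_edgeInner : BoundedCompactSupport ↿edgeInner :=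
  boundedCompactSupport_ite (by measurability) (by grind) continuous_const

lemma boundedCompactSupport_edgeOuter : BoundedCompactSupport ↿edgeOuter :=
  boundedCompactSupport_ite (by measurability) (by grind) continuous_const

lemma boundedCompactSupport_cornerTip : BoundedCompactSupport ↿cornerTip :=
  boundedCompactSupport_ite (f := fun x _ _ => 5 / 4 - x) (by measurability) (by grind)
    (by fun_prop)

lemma boundedCompactSupport_cornerSide : BoundedCompactSupport ↿cornerSide :=
  boundedCompactSupport_ite (f := fun _ y _ => 1 / 4 - y) (by measurability) (by grind)
    (by fun_prop)

lemma boundedCompactSupport_edgeCorrection : BoundedCompactSupport ↿edgeCorrection :=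
  boundedCompactSupport_edgeInner.sub boundedCompactSupport_edgeOuter

lemma boundedCompactSupport_cornerCorrection : BoundedCompactSupport ↿cornerCorrection :=
  ((boundedCompactSupport_cornerTip.sub boundedCompactSupport_cornerSide).sub
    boundedCompactSupport_cornerSide.swap_right).smul (-11)

lemma boundedCompactSupport_correction : BoundedCompactSupport ↿correction :=
  boundedCompactSupport_edgeCorrection.add boundedCompactSupport_cornerCorrection

lemma boundedCompactSupport_cutoff : BoundedCompactSupport ↿cutoff :=
  (boundedCompactSupport_core.mul boundedMeasurable_profileSum).add
    boundedCompactSupport_correction.symmetrization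

end Regularity

section Marginal

variable {x y : ℝ}

lemma integral_edgeCorrection (y z : ℝ) : ∫ x, edgeCorrection x y z = 0 := by
  wlog hyz : y ≤ z generalizing y z
  · simpa only [edgeCorrection_swap _ y z] using this z y (le_of_not_ge hyz)
  by_cases hz : 5 / 4 < y + z ∧ z ≤ 3 / 4
  · have edgeCorrection_eq : ∀ x, edgeCorrection x y z = (if 0 < x ∧ x ≤ 3 / 4 - z then 1 else 0) -
        if 3 / 4 - y < x ∧ x ≤ 3 / 2 - y - z then 1 else 0 := by
      grind [edgeCorrection, edgeInner, edgeOuter]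
    simp only [edgeCorrection_eq]
    rw [integral_sub (integrable_ite_Ioc continuous_const) (integrable_ite_Ioc continuous_const),
      integral_ite_Ioc (by linarith), integral_ite_Ioc (by linarith),
      intervalIntegral.integral_const, intervalIntegral.integral_const, smul_eq_mul, smul_eq_mul]
    ring
  · have edgeCorrection_eq_zero : ∀ x, edgeCorrection x y z = 0 := by
      grind [edgeCorrection, edgeInner, edgeOuter]
    simp only [edgeCorrection_eq_zero, integral_zero]

lemma integral_cornerCorrection (hxy : 5 / 4 < x + y) : ∫ z, cornerCorrection x y z = 0 := by
  by_cases hcorner : x ≤ 5 / 4 ∧ y ≤ 1 / 4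
  · have cornerCorrection_eq : ∀ z, cornerCorrection x y z =
        -11 * ((if 5 / 4 - x < z ∧ z ≤ 3 / 2 - x - y then 5 / 4 - x else 0) -
          if 0 < z ∧ z ≤ 5 / 4 - x then 1 / 4 - y else 0) := by
      grind [cornerCorrection, cornerTip, cornerSide]
    simp only [cornerCorrection_eq]
    rw [integral_const_mul, integral_sub (integrable_ite_Ioc continuous_const)
      (integrable_ite_Ioc continuous_const), integral_ite_Ioc (by linarith),
      integral_ite_Ioc (by linarith), intervalIntegral.integral_const,
      intervalIntegral.integral_const, smul_eq_mul, smul_eq_mul]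
    ring
  · have cornerCorrection_eq_zero : ∀ z, cornerCorrection x y z = 0 := by
      grind [cornerCorrection, cornerTip, cornerSide]
    simp only [cornerCorrection_eq_zero, integral_zero]

lemma cutoff_eq_of_lt (hxy : 5 / 4 < x + y) (z : ℝ) :
    cutoff x y z = edgeCorrection z x y + cornerCorrection x y z + cornerCorrection y x z := by
  have hcore : core x y z = 0 := by grind [core]
  have hedge : ∀ {a b}, 5 / 4 < a + b → edgeCorrection a b z = 0 := by
    intro a b hab
    by_contra h
    linarith [of_edgeCorrection_ne_zero h]
  have hcorner : cornerCorrection z x y = 0 := by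
    by_contra h
    linarith [of_cornerCorrection_ne_zero h]
  simp only [cutoff_apply, symmetrization_apply, correction, hcore, hedge hxy,
    hedge (add_comm x y ▸ hxy), hcorner]
  ring

lemma setIntegral_cutoff_eq_integral (x y : ℝ) :
    ∫ z in Set.Ioi 0, cutoff x y z = ∫ z, cutoff x y z :=
  setIntegral_eq_integral_of_forall_compl_eq_zero fun _ hz => cutoff_eq_zero fun h => hz h.2.2.1

lemma setIntegral_cutoff_eq_zero (hxy : 5 / 4 < x + y) : ∫ z in Set.Ioi 0, cutoff x y z = 0 := by
  have hedge : Integrable fun z => edgeCorrection z x y :=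
    boundedCompactSupport_edgeCorrection.swap_left.swap_right.integrable_slice x y
  have hcorner := boundedCompactSupport_cornerCorrection.integrable_slice
  have hsum : Integrable fun z => edgeCorrection z x y + cornerCorrection x y z :=
    hedge.add (hcorner x y)
  rw [setIntegral_cutoff_eq_integral]
  simp only [cutoff_eq_of_lt hxy]
  rw [integral_add hsum (hcorner y x), integral_add hedge (hcorner x y),
    integral_edgeCorrection, integral_cornerCorrection hxy,
    integral_cornerCorrection (by linarith), add_zero, add_zero]

end Marginal

section Gain

/-- The function whose symmetrization is `2 F S - F²` with `F = cutoff` and `S = profileSum`, that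
is, the linear gain in the duality bound against the energy of `F`. -/
noncomputable def gainDensity (x y z : ℝ) : ℝ :=
  core x y z * (profile y z ^ 2 + 2 * (profile x y * profile x z)) +
    2 * (correction x y z * profileSum x y z) - correction x y z ^ 2

/-- On `edgeInner` the product `profile x y * profile x z` is not covered by `core`; once the
contribution of `edgeCorrection` is taken into account, this is what is lost. -/
noncomputable def edgeLoss (x y z : ℝ) : ℝ :=
  edgeInner x y z * ((1 - profile x y) * (1 - profile x z))

/-- The contribution of `cornerTip` to `gainDensity`. -/
noncomputable def tipGain (x y z : ℝ) : ℝ :=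
  -22 * (cornerTip x y z * profile y z) - 121 * cornerTip x y z ^ 2

/-- The contribution of `cornerSide` to `gainDensity`. -/
noncomputable def sideGain (x y z : ℝ) : ℝ :=
  22 * (cornerSide x y z * profile y z) - 121 * cornerSide x y z ^ 2

lemma symmetrization_gainDensity (x y z : ℝ) : symmetrization gainDensity x y z =
    2 * (cutoff x y z * profileSum x y z) - cutoff x y z ^ 2 := by
  have hcore : core x y z ^ 2 = core x y z := by grind [core]
  have core_mul₁ := core_mul_correction x y z
  have core_mul₂ : core x y z * correction y x z = 0 := by
    rw [core_swap_left, core_mul_correction]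
  have core_mul₃ : core x y z * correction z x y = 0 := by
    rw [core_swap_right, core_swap_left, core_mul_correction]
  have mul₁₂ := correction_mul_correction x y z
  have mul₁₃ : correction x y z * correction z x y = 0 := by
    rw [correction_swap x, correction_mul_correction]
  have mul₂₃ : correction y x z * correction z x y = 0 := by
    rw [correction_swap y, correction_swap z, correction_mul_correction]
  have core₂ : core y x z = core x y z := core_swap_left y x z
  have core₃ : core z x y = core x y z := by rw [core_swap_left, core_swap_right]
  simp only [symmetrization_apply, gainDensity, cutoff_apply, profileSum_apply, core₂, core₃,
    profile_comm y x, profile_comm z x, profile_comm z y]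
  linear_combination (profile y z + profile x z + profile x y) ^ 2 * hcore +
    2 * (profile y z + profile x z + profile x y) * (core_mul₁ + core_mul₂ + core_mul₃) +
    2 * (mul₁₂ + mul₁₃ + mul₂₃)

lemma core_mul_profile_mul_profile (x y z : ℝ) : core x y z * (profile x y * profile x z) =
    (1 - edgeInner x y z) * (profile x y * profile x z) := by
  grind [core, edgeInner, profile]

lemma two_mul_edgeCorrection_mul_profileSum_sub_sq (x y z : ℝ) :
    2 * (edgeCorrection x y z * profileSum x y z) - edgeCorrection x y z ^ 2 =
      2 * (edgeInner x y z * (profile x y + profile x z - 1)) + edgeCorrection x y z := by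
  have edge_mul_sum : edgeCorrection x y z * profileSum x y z =
      edgeInner x y z * (profile x y + profile x z) := by
    grind [edgeCorrection, edgeInner, edgeOuter, profileSum_apply, profile]
  have edge_sq : edgeCorrection x y z ^ 2 = 2 * edgeInner x y z - edgeCorrection x y z := by
    grind [edgeCorrection, edgeInner, edgeOuter]
  linear_combination 2 * edge_mul_sum - edge_sq

lemma two_mul_cornerCorrection_mul_profileSum_sub_sq (x y z : ℝ) :
    2 * (cornerCorrection x y z * profileSum x y z) - cornerCorrection x y z ^ 2 =
      tipGain x y z + sideGain x y z + sideGain x z y := by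
  have corner_mul_sum : cornerCorrection x y z * profileSum x y z =
      cornerCorrection x y z * profile y z := by
    by_cases h : cornerCorrection x y z = 0
    · rw [h, zero_mul, zero_mul]
    · grind [of_cornerCorrection_ne_zero h, profileSum_apply, profile]
  have corner_sq : cornerCorrection x y z ^ 2 =
      121 * (cornerTip x y z ^ 2 + cornerSide x y z ^ 2 + cornerSide x z y ^ 2) := by
    grind [cornerCorrection, cornerTip, cornerSide]
  rw [corner_mul_sum, corner_sq, cornerCorrection, tipGain, sideGain, sideGain, profile_comm z y]
  ring

lemma gainDensity_eq (x y z : ℝ) : gainDensity x y z =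
    core x y z * profile y z ^ 2 + 2 * (profile x y * profile x z) - 2 * edgeLoss x y z +
      edgeCorrection x y z + tipGain x y z + sideGain x y z + sideGain x z y := by
  rw [gainDensity, correction, edgeLoss]
  linear_combination 2 * core_mul_profile_mul_profile x y z +
    two_mul_edgeCorrection_mul_profileSum_sub_sq x y z +
    two_mul_cornerCorrection_mul_profileSum_sub_sq x y z -
    2 * edgeCorrection_mul_cornerCorrection x y z

end Gain

section Evaluation

variable {a b : ℝ}

lemma integral_const_mul_id (c : ℝ) : ∫ x in a..b, c * x = c * ((b ^ 2 - a ^ 2) / 2) := by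
  rw [intervalIntegral.integral_const_mul, integral_id]

lemma integral_sextic (c₀ c₁ c₂ c₃ c₄ c₅ c₆ : ℝ) :
    ∫ x in a..b, (c₀ + c₁ * x + c₂ * x ^ 2 + c₃ * x ^ 3 + c₄ * x ^ 4 + c₅ * x ^ 5 + c₆ * x ^ 6) =
      c₀ * (b - a) + c₁ * (b ^ 2 - a ^ 2) / 2 + c₂ * (b ^ 3 - a ^ 3) / 3 +
        c₃ * (b ^ 4 - a ^ 4) / 4 + c₄ * (b ^ 5 - a ^ 5) / 5 + c₅ * (b ^ 6 - a ^ 6) / 6 +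
        c₆ * (b ^ 7 - a ^ 7) / 7 := by
  simp (disch := exact Continuous.intervalIntegrable (by fun_prop) _ _) only
    [intervalIntegral.integral_add, intervalIntegral.integral_const_mul, integral_const_mul_id,
    integral_pow, intervalIntegral.integral_const, smul_eq_mul]
  ring

lemma integral_quintic (c₀ c₁ c₂ c₃ c₄ c₅ : ℝ) :
    ∫ x in a..b, (c₀ + c₁ * x + c₂ * x ^ 2 + c₃ * x ^ 3 + c₄ * x ^ 4 + c₅ * x ^ 5) =
      c₀ * (b - a) + c₁ * (b ^ 2 - a ^ 2) / 2 + c₂ * (b ^ 3 - a ^ 3) / 3 +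
        c₃ * (b ^ 4 - a ^ 4) / 4 + c₄ * (b ^ 5 - a ^ 5) / 5 + c₅ * (b ^ 6 - a ^ 6) / 6 := by
  simpa only [zero_mul, zero_div, add_zero] using integral_sextic c₀ c₁ c₂ c₃ c₄ c₅ 0

lemma integral_profilePoly (x a b : ℝ) : ∫ y in a..b, profilePoly x y =
    (4 - 7 * x + 4 * x ^ 2) * (b - a) + (7 * x - 7) / 2 * (b ^ 2 - a ^ 2) +
      4 / 3 * (b ^ 3 - a ^ 3) := by
  unfold profilePoly
  ring_nf
  simp (disch := exact Continuous.intervalIntegrable (by fun_prop) _ _) only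
    [intervalIntegral.integral_add, intervalIntegral.integral_sub,
    intervalIntegral.integral_const_mul, intervalIntegral.integral_mul_const,
    integral_const_mul_id, integral_pow, integral_id, intervalIntegral.integral_const,
    smul_eq_mul]
  ring

lemma integral_profile_sq : ∫ p : ℝ × ℝ, profile p.1 p.2 ^ 2 = 13365 / 16384 := by
  have integral_snd : ∀ x : ℝ, ∫ y in (0 : ℝ)..3 / 4 - x, profilePoly x y ^ 2 =
      2541 / 640 + -2165 / 128 * x + 2005 / 64 * x ^ 2 + -505 / 16 * x ^ 3 + 205 / 12 * x ^ 4 +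
        -21 / 5 * x ^ 5 := fun x => by
    unfold profilePoly
    ring_nf
    simp (disch := exact Continuous.intervalIntegrable (by fun_prop) _ _) only
      [intervalIntegral.integral_add, intervalIntegral.integral_sub,
      intervalIntegral.integral_const_mul, intervalIntegral.integral_mul_const,
      integral_const_mul_id, integral_pow, integral_id, intervalIntegral.integral_const,
      smul_eq_mul]
    ring
  rw [integral_prod_eq_iterated (f := fun x y => profile x y ^ 2)
    (P := fun x y => profilePoly x y ^ 2) (a := 0) (b := 3 / 4)
    (l := fun _ => 0) (u := fun x => 3 / 4 - x) boundedCompactSupport_profile.sq.integrable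
    (by norm_num) (by grind) (by grind [profile])]
  simp only [integral_snd, integral_quintic]
  norm_num

lemma boundedCompactSupport_edgeLoss : BoundedCompactSupport ↿edgeLoss :=
  boundedCompactSupport_edgeInner.mul
    (((BoundedMeasurable.const 1).sub boundedMeasurable_profile_fst_snd).mul
      ((BoundedMeasurable.const 1).sub boundedMeasurable_profile_fst_thd))

lemma boundedCompactSupport_tipGain : BoundedCompactSupport ↿tipGain :=
  ((boundedCompactSupport_cornerTip.mul boundedMeasurable_profile_snd_thd).smul (-22)).sub
    (boundedCompactSupport_cornerTip.sq.smul 121)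

lemma boundedCompactSupport_sideGain : BoundedCompactSupport ↿sideGain :=
  ((boundedCompactSupport_cornerSide.mul boundedMeasurable_profile_snd_thd).smul 22).sub
    (boundedCompactSupport_cornerSide.sq.smul 121)

lemma tripleIntegral_edgeLoss : tripleIntegral edgeLoss = 181 / 41287680 := by
  have integral_snd : ∀ x : ℝ, ∫ y in 1 / 2 + x..3 / 4 - x, ∫ z in 5 / 4 - y..3 / 4 - x,
      (1 - profilePoly x y) * (1 - profilePoly x z) =
        29 / 92160 + -259 / 15360 * x + 2021 / 6144 * x ^ 2 + -1703 / 576 * x ^ 3 +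
          1193 / 96 * x ^ 4 + -641 / 30 * x ^ 5 + 544 / 45 * x ^ 6 := fun x => by
    simp (disch := exact Continuous.intervalIntegrable (by fun_prop) _ _) only
      [intervalIntegral.integral_const_mul, intervalIntegral.integral_sub, integral_profilePoly,
      intervalIntegral.integral_const, smul_eq_mul]
    unfold profilePoly
    ring_nf
    simp (disch := exact Continuous.intervalIntegrable (by fun_prop) _ _) only
      [intervalIntegral.integral_add, intervalIntegral.integral_const_mul,
      intervalIntegral.integral_mul_const, integral_const_mul_id, integral_pow, integral_id,
      intervalIntegral.integral_const, smul_eq_mul]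
    ring
  rw [tripleIntegral_eq_iterated (P := fun x y z => (1 - profilePoly x y) * (1 - profilePoly x z))
    (a := 0) (b := 1 / 8) (l := fun x => 1 / 2 + x) (u := fun x => 3 / 4 - x)
    (l' := fun _ y => 5 / 4 - y) (u' := fun x _ => 3 / 4 - x)
    boundedCompactSupport_edgeLoss.integrable (by norm_num) (by grind) (by grind)
    (by grind [edgeLoss, edgeInner, profile])]
  simp only [integral_snd, integral_sextic]
  norm_num

lemma tripleIntegral_tipGain : tripleIntegral tipGain = -14839 / 1474560 := by
  have integral_snd : ∀ x : ℝ, ∫ y in 5 / 4 - x..1 / 4, ∫ z in 5 / 4 - x..3 / 2 - y - x,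
      (-22 * ((5 / 4 - x) * profilePoly y z) - 121 * (5 / 4 - x) ^ 2) =
        -28765 / 192 + 60071 / 96 * x + -203929 / 192 * x ^ 2 + 44275 / 48 * x ^ 3 +
          -19789 / 48 * x ^ 4 + 913 / 12 * x ^ 5 := fun x => by
    simp (disch := exact Continuous.intervalIntegrable (by fun_prop) _ _) only
      [intervalIntegral.integral_const_mul, intervalIntegral.integral_sub, integral_profilePoly,
      intervalIntegral.integral_const, smul_eq_mul]
    ring_nf
    simp (disch := exact Continuous.intervalIntegrable (by fun_prop) _ _) only
      [intervalIntegral.integral_add, intervalIntegral.integral_sub,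
      intervalIntegral.integral_const_mul, intervalIntegral.integral_mul_const,
      integral_const_mul_id, integral_pow, integral_id, intervalIntegral.integral_const,
      smul_eq_mul]
    ring
  rw [tripleIntegral_eq_iterated
    (P := fun x y z => -22 * ((5 / 4 - x) * profilePoly y z) - 121 * (5 / 4 - x) ^ 2)
    (a := 1) (b := 5 / 4) (l := fun x => 5 / 4 - x) (u := fun _ => 1 / 4)
    (l' := fun x _ => 5 / 4 - x) (u' := fun x y => 3 / 2 - y - x)
    boundedCompactSupport_tipGain.integrable (by norm_num) (by grind) (by grind)
    (by grind [tipGain, cornerTip, profile])]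
  simp only [integral_snd, integral_quintic]
  norm_num

lemma tripleIntegral_sideGain : tripleIntegral sideGain = 979 / 122880 := by
  have integral_snd : ∀ x : ℝ, ∫ y in 5 / 4 - x..1 / 4, ∫ z in (0 : ℝ)..5 / 4 - x,
      (22 * ((1 / 4 - y) * profilePoly y z) - 121 * (1 / 4 - y) ^ 2) =
        34595 / 384 + -25201 / 64 * x + 90673 / 128 * x ^ 2 + -3949 / 6 * x ^ 3 +
          7579 / 24 * x ^ 4 + -187 / 3 * x ^ 5 := fun x => by
    simp (disch := exact Continuous.intervalIntegrable (by fun_prop) _ _) only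
      [intervalIntegral.integral_const_mul, intervalIntegral.integral_sub, integral_profilePoly,
      intervalIntegral.integral_const, smul_eq_mul]
    ring_nf
    simp (disch := exact Continuous.intervalIntegrable (by fun_prop) _ _) only
      [intervalIntegral.integral_add, intervalIntegral.integral_sub,
      intervalIntegral.integral_const_mul, intervalIntegral.integral_mul_const, integral_pow,
      integral_id, intervalIntegral.integral_const, smul_eq_mul]
    ring
  rw [tripleIntegral_eq_iterated
    (P := fun _ y z => 22 * ((1 / 4 - y) * profilePoly y z) - 121 * (1 / 4 - y) ^ 2)
    (a := 1) (b := 5 / 4) (l := fun x => 5 / 4 - x) (u := fun _ => 1 / 4)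
    (l' := fun _ _ => 0) (u' := fun x _ => 5 / 4 - x)
    boundedCompactSupport_sideGain.integrable (by norm_num) (by grind) (by grind)
    (by grind [sideGain, cornerSide, profile])]
  simp only [integral_snd, integral_quintic]
  norm_num

lemma boundedCompactSupport_profile_mul_profile :
    BoundedCompactSupport ↿fun x y z => profile x y * profile x z := by
  have profile_mul_profile : (fun x y z => profile x y * profile x z) = fun x y z =>
      if 0 < x ∧ (0 < y ∧ x + y ≤ 3 / 4) ∧ 0 < z ∧ x + z ≤ 3 / 4 then
        profilePoly x y * profilePoly x z else 0 := by
    grind [profile]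
  rw [profile_mul_profile]
  exact boundedCompactSupport_ite (f := fun x y z => profilePoly x y * profilePoly x z)
    (by measurability) (by grind) (by fun_prop)

lemma tripleIntegral_profile_mul_profile :
    tripleIntegral (fun x y z => profile x y * profile x z) = 946989 / 2293760 := by
  have integral_snd : ∀ x : ℝ, ∫ y in (0 : ℝ)..3 / 4 - x, ∫ z in (0 : ℝ)..3 / 4 - x,
      profilePoly x y * profilePoly x z =
        2601 / 1024 + -6987 / 512 * x + 32641 / 1024 * x ^ 2 + -2703 / 64 * x ^ 3 +
          3241 / 96 * x ^ 4 + -187 / 12 * x ^ 5 + 121 / 36 * x ^ 6 := fun x => by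
    simp only [intervalIntegral.integral_const_mul, intervalIntegral.integral_mul_const,
      integral_profilePoly]
    ring
  rw [tripleIntegral_eq_iterated (P := fun x y z => profilePoly x y * profilePoly x z)
    (a := 0) (b := 3 / 4) (l := fun _ => 0) (u := fun x => 3 / 4 - x)
    (l' := fun _ _ => 0) (u' := fun x _ => 3 / 4 - x)
    boundedCompactSupport_profile_mul_profile.integrable (by norm_num) (by grind) (by grind)
    (by grind [profile])]
  simp only [integral_snd, integral_sextic]
  norm_num

/-- The function `core z x y * profile x y ^ 2` on the region `x < y`, `x ≤ 1 / 4`, where the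
condition `y + z ≤ 1 + ε` implies the others. -/
noncomputable def coreLow (x y z : ℝ) : ℝ :=
  if (0 < x ∧ x ≤ 1 / 4) ∧ (x < y ∧ y ≤ 3 / 4 - x) ∧ (0 < z ∧ z ≤ 5 / 4 - y) then
    profilePoly x y ^ 2 else 0

/-- The function `core z x y * profile x y ^ 2` on the region `x < y`, `1 / 4 < x`, where the
condition `x + y + z ≤ 3 / 2` implies the others. -/
noncomputable def coreHigh (x y z : ℝ) : ℝ :=
  if (1 / 4 < x ∧ x ≤ 3 / 8) ∧ (x < y ∧ y ≤ 3 / 4 - x) ∧ (0 < z ∧ z ≤ 3 / 2 - x - y) then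
    profilePoly x y ^ 2 else 0

lemma boundedCompactSupport_coreLow : BoundedCompactSupport ↿coreLow :=
  boundedCompactSupport_ite (f := fun x y _ => profilePoly x y ^ 2) (by measurability) (by grind)
    (by fun_prop)

lemma boundedCompactSupport_coreHigh : BoundedCompactSupport ↿coreHigh :=
  boundedCompactSupport_ite (f := fun x y _ => profilePoly x y ^ 2) (by measurability) (by grind)
    (by fun_prop)

lemma tripleIntegral_coreLow : tripleIntegral coreLow = 1138651 / 2949120 := by
  have integral_snd : ∀ x : ℝ, ∫ y in x..3 / 4 - x, ∫ _ in (0 : ℝ)..5 / 4 - y,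
      profilePoly x y ^ 2 =
        21063 / 5120 + -1471 / 40 * x + 145667 / 1024 * x ^ 2 + -29225 / 96 * x ^ 3 +
          11875 / 32 * x ^ 4 + -14389 / 60 * x ^ 5 + 896 / 15 * x ^ 6 := fun x => by
    simp only [intervalIntegral.integral_const, smul_eq_mul]
    unfold profilePoly
    ring_nf
    simp (disch := exact Continuous.intervalIntegrable (by fun_prop) _ _) only
      [intervalIntegral.integral_add, intervalIntegral.integral_sub,
      intervalIntegral.integral_const_mul, intervalIntegral.integral_mul_const, integral_pow,
      integral_id, intervalIntegral.integral_const, smul_eq_mul]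
    ring
  rw [tripleIntegral_eq_iterated (a := 0) (b := 1 / 4) (l := fun x => x) (u := fun x => 3 / 4 - x)
    (l' := fun _ _ => 0) (u' := fun _ y => 5 / 4 - y) (P := fun x y _ => profilePoly x y ^ 2)
    boundedCompactSupport_coreLow.integrable (by norm_num) (by grind) (by grind)
    (fun _ _ _ => rfl)]
  simp only [integral_snd, integral_sextic]
  norm_num

lemma tripleIntegral_coreHigh : tripleIntegral coreHigh = 40921 / 2949120 := by
  have integral_snd : ∀ x : ℝ, ∫ y in x..3 / 4 - x, ∫ _ in (0 : ℝ)..3 / 2 - x - y,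
      profilePoly x y ^ 2 =
        5229 / 1024 + -125373 / 2560 * x + 208895 / 1024 * x ^ 2 + -22747 / 48 * x ^ 3 +
          61585 / 96 * x ^ 4 + -1435 / 3 * x ^ 5 + 2282 / 15 * x ^ 6 := fun x => by
    simp only [intervalIntegral.integral_const, smul_eq_mul]
    unfold profilePoly
    ring_nf
    simp (disch := exact Continuous.intervalIntegrable (by fun_prop) _ _) only
      [intervalIntegral.integral_add, intervalIntegral.integral_sub,
      intervalIntegral.integral_const_mul, intervalIntegral.integral_mul_const,
      integral_const_mul_id, integral_pow, integral_id, intervalIntegral.integral_const,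
      smul_eq_mul]
    ring
  rw [tripleIntegral_eq_iterated (a := 1 / 4) (b := 3 / 8) (l := fun x => x)
    (u := fun x => 3 / 4 - x) (l' := fun _ _ => 0) (u' := fun x y => 3 / 2 - x - y)
    (P := fun x y _ => profilePoly x y ^ 2) boundedCompactSupport_coreHigh.integrable
    (by norm_num) (by grind) (by grind) (fun _ _ _ => rfl)]
  simp only [integral_snd, integral_sextic]
  norm_num

end Evaluation

section LowerBound

lemma coreLow_add_coreHigh (x y z : ℝ) : (coreLow + coreHigh) x y z =
    if x < y then core z x y * profile x y ^ 2 else 0 := by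
  simp only [Pi.add_apply]
  grind [coreLow, coreHigh, core, profile]

lemma coreLow_add_coreHigh_add_swap_le (x y z : ℝ) :
    (coreLow + coreHigh) x y z + (coreLow + coreHigh) y x z ≤ core z x y * profile x y ^ 2 := by
  have hcore : 0 ≤ core z x y := by grind [core]
  have hnonneg : 0 ≤ core z x y * profile x y ^ 2 := mul_nonneg hcore (sq_nonneg _)
  rw [coreLow_add_coreHigh, coreLow_add_coreHigh, core_swap_right z y x, profile_comm y x]
  split_ifs <;> linarith

lemma boundedCompactSupport_core_mul_profile_sq :
    BoundedCompactSupport ↿fun x y z => core x y z * profile y z ^ 2 :=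
  boundedCompactSupport_core.mul boundedMeasurable_profile_snd_thd.sq

lemma le_tripleIntegral_core_mul_profile_sq :
    294893 / 368640 ≤ tripleIntegral fun x y z => core x y z * profile y z ^ 2 := by
  have hcore := boundedCompactSupport_core_mul_profile_sq
  have hhalf : BoundedCompactSupport ↿(coreLow + coreHigh) :=
    boundedCompactSupport_coreLow.add boundedCompactSupport_coreHigh
  have integral_half : tripleIntegral (coreLow + coreHigh) = 294893 / 737280 := by
    rw [tripleIntegral_add boundedCompactSupport_coreLow.integrable
      boundedCompactSupport_coreHigh.integrable, tripleIntegral_coreLow, tripleIntegral_coreHigh]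
    norm_num
  calc (294893 / 368640 : ℝ)
      = tripleIntegral (coreLow + coreHigh) +
          tripleIntegral (fun x y z => (coreLow + coreHigh) y x z) := by
        rw [tripleIntegral_swap_left (coreLow + coreHigh), integral_half]
        norm_num
    _ = tripleIntegral ((coreLow + coreHigh) + fun x y z => (coreLow + coreHigh) y x z) :=
        (tripleIntegral_add hhalf.integrable hhalf.swap_left.integrable).symm
    _ ≤ tripleIntegral fun x y z => core z x y * profile x y ^ 2 :=
        tripleIntegral_mono (hhalf.add hhalf.swap_left).integrable
          hcore.swap_left.swap_right.integrable coreLow_add_coreHigh_add_swap_le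
    _ = tripleIntegral fun x y z => core x y z * profile y z ^ 2 :=
        tripleIntegral_rotate fun x y z => core x y z * profile y z ^ 2

lemma tripleIntegral_edgeCorrection : tripleIntegral edgeCorrection = 0 := by
  rw [← tripleIntegral_rotate, tripleIntegral_eq_integral_marginal
    boundedCompactSupport_edgeCorrection.swap_left.swap_right]
  simp only [integral_edgeCorrection, integral_zero]

lemma boundedCompactSupport_gainDensity : BoundedCompactSupport ↿gainDensity :=
  ((boundedCompactSupport_core.mul (boundedMeasurable_profile_snd_thd.sq.add
    ((BoundedMeasurable.const 2).mul
      (boundedMeasurable_profile_fst_snd.mul boundedMeasurable_profile_fst_thd)))).add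
    ((boundedCompactSupport_correction.mul boundedMeasurable_profileSum).smul 2)).sub
    boundedCompactSupport_correction.sq

lemma two_mul_integral_profile_sq_lt :
    2 * ∫ p : ℝ × ℝ, profile p.1 p.2 ^ 2 < tripleIntegral gainDensity := by
  have hcore := boundedCompactSupport_core_mul_profile_sq
  have hprofile := boundedCompactSupport_profile_mul_profile.smul 2
  have hloss := boundedCompactSupport_edgeLoss.smul 2
  have hedge := boundedCompactSupport_edgeCorrection
  have htip := boundedCompactSupport_tipGain
  have hside := boundedCompactSupport_sideGain
  have gainDensity_eq_sum : gainDensity = (fun x y z => core x y z * profile y z ^ 2) +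
      (2 : ℝ) • (fun x y z => profile x y * profile x z) - (2 : ℝ) • edgeLoss + edgeCorrection +
        tipGain + sideGain + fun x y z => sideGain x z y := by
    funext x y z
    exact gainDensity_eq x y z
  rw [gainDensity_eq_sum,
    tripleIntegral_add (((((hcore.add hprofile).sub hloss).add hedge).add htip).add
      hside).integrable hside.swap_right.integrable,
    tripleIntegral_add ((((hcore.add hprofile).sub hloss).add hedge).add htip).integrable
      hside.integrable,
    tripleIntegral_add (((hcore.add hprofile).sub hloss).add hedge).integrable htip.integrable,
    tripleIntegral_add ((hcore.add hprofile).sub hloss).integrable hedge.integrable,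
    tripleIntegral_sub (hcore.add hprofile).integrable hloss.integrable,
    tripleIntegral_add hcore.integrable hprofile.integrable,
    tripleIntegral_smul, tripleIntegral_smul, tripleIntegral_swap_right sideGain,
    tripleIntegral_profile_mul_profile, tripleIntegral_edgeLoss, tripleIntegral_edgeCorrection,
    tripleIntegral_tipGain, tripleIntegral_sideGain, integral_profile_sq]
  linarith [le_tripleIntegral_core_mul_profile_sq]

lemma tripleIntegral_gainDensity : 3 * tripleIntegral gainDensity =
    2 * tripleIntegral (cutoff * profileSum) - tripleIntegral (cutoff ^ 2) := by
  have symmetrization_eq : symmetrization gainDensity =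
      (2 : ℝ) • (cutoff * profileSum) - cutoff ^ 2 := by
    funext x y z
    exact symmetrization_gainDensity x y z
  rw [← tripleIntegral_symmetrization boundedCompactSupport_gainDensity, symmetrization_eq,
    tripleIntegral_sub
      ((boundedCompactSupport_cutoff.mul boundedMeasurable_profileSum).smul 2).integrable
      boundedCompactSupport_cutoff.sq.integrable, tripleIntegral_smul]

lemma six_mul_integral_profile_sq_lt : 6 * ∫ p : ℝ × ℝ, profile p.1 p.2 ^ 2 <
    2 * tripleIntegral (cutoff * profileSum) - tripleIntegral (cutoff ^ 2) := by
  linarith [two_mul_integral_profile_sq_lt, tripleIntegral_gainDensity]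

end LowerBound

section Conclusion

lemma memLp_two_cutoff : MemLp (fun q : ℝ × ℝ × ℝ => cutoff q.1 q.2.1 q.2.2) 2 volume :=
  (memLp_two_iff_integrable_sq boundedCompactSupport_cutoff.measurable.aestronglyMeasurable).mpr
    boundedCompactSupport_cutoff.sq.integrable

lemma not_cutoff_ae_eq_zero :
    ¬ (fun q : ℝ × ℝ × ℝ => cutoff q.1 q.2.1 q.2.2) =ᵐ[volume] 0 := by
  intro h
  have integral_mul_eq_zero : tripleIntegral (cutoff * profileSum) = 0 :=
    integral_eq_zero_of_ae <| h.mono fun q hq => mul_eq_zero_of_left hq _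
  have integral_sq_nonneg : 0 ≤ tripleIntegral (cutoff ^ 2) := integral_nonneg fun _ => sq_nonneg _
  have integral_profile_sq_nonneg : 0 ≤ ∫ p : ℝ × ℝ, profile p.1 p.2 ^ 2 :=
    integral_nonneg fun _ => sq_nonneg _
  linarith [six_mul_integral_profile_sq_lt]

lemma setIntegral_cutoff_sq :
    ∫ q in {q : ℝ × ℝ × ℝ | 0 ≤ q.1 ∧ 0 ≤ q.2.1 ∧ 0 ≤ q.2.2}, cutoff q.1 q.2.1 q.2.2 ^ 2 =
      tripleIntegral (cutoff ^ 2) :=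
  setIntegral_eq_integral_of_forall_compl_eq_zero fun q hq => by
    rw [cutoff_eq_zero fun h => hq ⟨h.1.le, h.2.1.le, h.2.2.1.le⟩, zero_pow two_ne_zero]

lemma two_mul_tripleIntegral_cutoff_sq_lt : 2 * tripleIntegral (cutoff ^ 2) <
    3 * ∫ p in {p : ℝ × ℝ | 0 ≤ p.1 ∧ 0 ≤ p.2 ∧ p.1 + p.2 ≤ 1 - 1 / 4},
      (∫ z, cutoff p.1 p.2 z) ^ 2 := by
  have duality : 4 * tripleIntegral (cutoff * profileSum) -
      12 * ∫ p : ℝ × ℝ, profile p.1 p.2 ^ 2 ≤ _ :=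
    le_setIntegral_marginal_sq
      (T := {p : ℝ × ℝ | 0 ≤ p.1 ∧ 0 ≤ p.2 ∧ p.1 + p.2 ≤ 1 - 1 / 4}) (by measurability)
      boundedCompactSupport_cutoff cutoff_swap_left cutoff_swap_right boundedCompactSupport_profile
      (by grind [profile])
  linarith [six_mul_integral_profile_sq_lt]

end Conclusion

end ThreeDimCutoff

/-- **Polymath8b, Theorem 3.14 (a piecewise polynomial cutoff)**: with `ε = 1/4`, there
is a square-integrable `F : [0,∞)³ → ℝ`, symmetric in its variables, supported on the
simplex `{t₁+t₂+t₃ ≤ 3/2}`, not a.e. zero, whose marginal `∫_0^∞ F dt₃` vanishes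
whenever `t₁, t₂ ≥ 0` with `t₁+t₂ > 1+ε`, and with
`3 ∫_{t₁+t₂ ≤ 1−ε} (∫_0^∞ F dt₃)² dt₁ dt₂ > 2 ∫_{[0,∞)³} F²`. -/
theorem exists_three_dim_cutoff :
    ∃ F : ℝ → ℝ → ℝ → ℝ,
      MemLp (fun q : ℝ × ℝ × ℝ => F q.1 q.2.1 q.2.2) 2 volume ∧
      (∀ t₁ t₂ t₃, F t₁ t₂ t₃ = F t₂ t₁ t₃) ∧
      (∀ t₁ t₂ t₃, F t₁ t₂ t₃ = F t₁ t₃ t₂) ∧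
      (∀ t₁ t₂ t₃ : ℝ, ¬ (0 ≤ t₁ ∧ 0 ≤ t₂ ∧ 0 ≤ t₃ ∧ t₁ + t₂ + t₃ ≤ 3 / 2) →
        F t₁ t₂ t₃ = 0) ∧
      ¬ ((fun q : ℝ × ℝ × ℝ => F q.1 q.2.1 q.2.2) =ᵐ[volume] 0) ∧
      (∀ t₁ t₂ : ℝ, 0 ≤ t₁ → 0 ≤ t₂ → 1 + 1 / 4 < t₁ + t₂ →
        (∫ s in Set.Ioi (0 : ℝ), F t₁ t₂ s) = 0) ∧
      2 * (∫ q in {q : ℝ × ℝ × ℝ | 0 ≤ q.1 ∧ 0 ≤ q.2.1 ∧ 0 ≤ q.2.2},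
            (F q.1 q.2.1 q.2.2) ^ 2) <
        3 * (∫ p in {p : ℝ × ℝ | 0 ≤ p.1 ∧ 0 ≤ p.2 ∧ p.1 + p.2 ≤ 1 - 1 / 4},
            (∫ s in Set.Ioi (0 : ℝ), F p.1 p.2 s) ^ 2) := by
  refine ⟨ThreeDimCutoff.cutoff, ThreeDimCutoff.memLp_two_cutoff,
    ThreeDimCutoff.cutoff_swap_left, ThreeDimCutoff.cutoff_swap_right,
    fun x y z h => ThreeDimCutoff.cutoff_eq_zero fun hpos => h ?_,
    ThreeDimCutoff.not_cutoff_ae_eq_zero,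
    fun x y _ _ hxy => ThreeDimCutoff.setIntegral_cutoff_eq_zero (by linarith), ?_⟩
  · exact ⟨hpos.1.le, hpos.2.1.le, hpos.2.2.1.le, hpos.2.2.2⟩
  · simp only [ThreeDimCutoff.setIntegral_cutoff_sq,
      ThreeDimCutoff.setIntegral_cutoff_eq_integral]
    exact ThreeDimCutoff.two_mul_tripleIntegral_cutoff_sq_lt
end
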